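/- For every integer k ≥ 1, Σ_{n ≤ x} ω(n) = x·log log x + B₁·x − c₀·x/log x − c₁·1!·x/(log x)² − ⋯ − c_{k-1}·(k-1)!·x/(log x)^k + O_k(x/(log x)^{k+1}) as x → ∞. -/

import Mathlib

open Filter Real MeasureTheory
open scoped Classical

/-- The Mertens constant `B₁ = γ - Σ_p Σ_{k ≥ 2} 1/(k p^k)`. -/
noncomputable def mertensB1 : ℝ :=
  Real.eulerMascheroniConstant -
    ∑' p : Nat.Primes, ∑' k : ℕ, 1 / (((k + 2) : ℝ) * ((p : ℕ) : ℝ) ^ (k + 2))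

/-- `cconst n = (1/n!) ∫₁^∞ {u} (log u)^n / u² du`. -/
noncomputable def cconst (n : ℕ) : ℝ :=
  (1 / (n.factorial : ℝ)) * ∫ u in Set.Ioi (1:ℝ), Int.fract u * (Real.log u) ^ n / u ^ 2

open Asymptotics Topology
open scoped FourierTransform

/-!
Since `∑_{n ≤ x} ω(n) = ∑_{p ≤ x} ⌊x / p⌋`, cut the sum over primes at `x / y` with
`y = (log x) ^ B`. Below the cut, `⌊x / p⌋ = x / p + O(1)` and Mertens' theorem give
`x (log log (x / y) + B₁)`. Above it, counting the multiples `m ≤ y` instead of the primes and using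
`π(b) - π(a) ≈ ∫_a^b dt / log t` gives `x ∫_1^y ⌊u⌋ / (u² (L - log u)) du` with `L = log x`. Writing
`⌊u⌋ = u - {u}`, the first part is `x (log log x - log log (x / y))`, and expanding
`1 / (L - log u)` in powers of `log u / L` turns the second into `∑ c_n n! x / L ^ (n + 1)`.

Both ranges need an error `O(x / (log x) ^ A)` for every `A` in the prime number theorem. The
3-4-1 inequality bounds `ζ` from below slightly to the left of `Re s = 1`, so all derivatives of the
Laplace transform of `∫_0^y (ψ(e^u) - e^u) du` decay on that line; hence the integral is
`O(e^y / y ^ A)`, and one-sided monotonicity transfers the bound to `ψ` itself. The constant in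
Mertens' theorem is identified by comparing `∑ p ^ (-s)` with `log ζ(s)` as `s → 1⁺`, where `γ`
enters through `Γ'(1) = -γ`.
-/

/-! ### Bounds for `ζ` near the line `Re s = 1` -/

/-- `∫_a^∞ {u} u^{-s-1} du`, the remainder in the Euler–Maclaurin formula for `ζ`. -/
noncomputable def fractIntegral (a : ℝ) (s : ℂ) : ℂ :=
  ∫ u in Set.Ioi a, ((Int.fract u : ℝ) : ℂ) * (u : ℂ) ^ (-(s + 1))

lemma norm_fract_mul_cpow_le {u : ℝ} (hu : 0 < u) (s : ℂ) :
    ‖((Int.fract u : ℝ) : ℂ) * (u : ℂ) ^ (-(s + 1))‖ ≤ u ^ (-(s.re + 1)) := by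
  rw [norm_mul, Complex.norm_cpow_eq_rpow_re_of_pos hu, Complex.norm_real,
    Real.norm_of_nonneg (Int.fract_nonneg u)]
  simpa using mul_le_of_le_one_left (rpow_nonneg hu.le _) (Int.fract_lt_one u).le

lemma integrableOn_fract_mul_cpow {a : ℝ} (ha : 0 < a) {s : ℂ} (hs : 0 < s.re) :
    IntegrableOn (fun u : ℝ => ((Int.fract u : ℝ) : ℂ) * (u : ℂ) ^ (-(s + 1))) (Set.Ioi a) := by
  refine (integrableOn_Ioi_rpow_of_lt (a := -(s.re + 1)) (by linarith) ha).mono' ?_ ?_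
  · exact (by fun_prop : Measurable _).aestronglyMeasurable
  · exact (ae_restrict_iff' measurableSet_Ioi).mpr <| .of_forall fun u hu =>
      norm_fract_mul_cpow_le (ha.trans hu) s

lemma norm_fractIntegral_le {a : ℝ} (ha : 0 < a) {s : ℂ} (hs : 0 < s.re) :
    ‖fractIntegral a s‖ ≤ a ^ (-s.re) / s.re := by
  have hexp : -(s.re + 1) < -1 := by linarith
  calc ‖fractIntegral a s‖ ≤ ∫ u in Set.Ioi a, u ^ (-(s.re + 1)) :=
        norm_integral_le_of_norm_le (integrableOn_Ioi_rpow_of_lt hexp ha) <|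
          (ae_restrict_iff' measurableSet_Ioi).mpr <| .of_forall fun u hu =>
            norm_fract_mul_cpow_le (ha.trans hu) s
    _ = a ^ (-s.re) / s.re := by
        rw [integral_Ioi_rpow_of_lt hexp ha, neg_add, neg_add_cancel_right, neg_div_neg_eq]

lemma fractIntegral_eq_mellin {a : ℝ} (ha : 0 ≤ a) (s : ℂ) :
    fractIntegral a s = mellin ((Set.Ioi a).indicator fun u => ((Int.fract u : ℝ) : ℂ)) (-s) := by
  have hrw (u : ℝ) :
      (u : ℂ) ^ (-s - 1) • (Set.Ioi a).indicator (fun v => ((Int.fract v : ℝ) : ℂ)) u =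
        (Set.Ioi a).indicator (fun v => ((Int.fract v : ℝ) : ℂ) * (v : ℂ) ^ (-(s + 1))) u := by
    rw [show -s - 1 = -(s + 1) by ring]
    by_cases hu : u ∈ Set.Ioi a <;> simp [hu, mul_comm]
  simp only [mellin, hrw]
  rw [setIntegral_indicator measurableSet_Ioi, fractIntegral,
    Set.inter_eq_right.mpr (Set.Ioi_subset_Ioi ha)]

lemma differentiableAt_fractIntegral {a : ℝ} (ha : 0 < a) {s : ℂ} (hs : 0 < s.re) :
    DifferentiableAt ℂ (fractIntegral a) s := by
  set f : ℝ → ℂ := (Set.Ioi a).indicator fun u => ((Int.fract u : ℝ) : ℂ) with hf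
  have hbound (u : ℝ) : ‖f u‖ ≤ 1 := by
    refine (norm_indicator_le_norm_self _ _).trans ?_
    rw [Complex.norm_real, Real.norm_of_nonneg (Int.fract_nonneg u)]
    exact (Int.fract_lt_one u).le
  have hmeas : Measurable f := Measurable.indicator (by fun_prop) measurableSet_Ioi
  have hloc : LocallyIntegrableOn f (Set.Ioi 0) :=
    ((locallyIntegrable_const (1 : ℝ)).mono hmeas.aestronglyMeasurable
      (.of_forall fun u => by simpa using hbound u)).locallyIntegrableOn _
  have htop : f =O[atTop] (· ^ (-(0 : ℝ))) := IsBigO.of_bound 1 <| .of_forall fun u => by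
    simpa using hbound u
  have hbot : f =O[𝓝[>] 0] (· ^ (-(-s.re - 1))) := by
    refine EventuallyEq.trans_isBigO (f₂ := fun _ => (0 : ℂ)) ?_ (isBigO_zero _ _)
    filter_upwards [nhdsWithin_le_nhds (gt_mem_nhds ha)] with u hu
    simp [hf, hu.le]
  rw [show fractIntegral a = mellin f ∘ Neg.neg from funext (fractIntegral_eq_mellin ha.le)]
  exact (mellin_differentiableAt_of_isBigO_rpow hloc htop (by simpa using hs) hbot
    (by simp)).comp s differentiable_neg.differentiableAt

lemma sum_Icc_one_floor_eq_sub_fract {u : ℝ} (hu : 0 ≤ u) :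
    ∑ _k ∈ Finset.Icc 1 ⌊u⌋₊, (1 : ℂ) = u - Int.fract u := by
  have hfloor : (⌊u⌋₊ : ℝ) = u - Int.fract u := by
    rw [natCast_floor_eq_intCast_floor hu, Int.self_sub_fract]
  rw [Finset.sum_const, Nat.card_Icc, Nat.add_sub_cancel, nsmul_one]
  exact_mod_cast congrArg ((↑) : ℝ → ℂ) hfloor

lemma riemannZeta_eq_mul_integral_floor {s : ℂ} (hs : 1 < s.re) :
    riemannZeta s =
      s * ∫ u in Set.Ioi (1 : ℝ), (∑ _k ∈ Finset.Icc 1 ⌊u⌋₊, (1 : ℂ)) * (u : ℂ) ^ (-(s + 1)) := by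
  rw [← LSeries_one_eq_riemannZeta hs]
  refine LSeries_eq_mul_integral 1 zero_le_one hs (LSeriesSummable_one_iff.mpr hs) ?_
  exact IsBigO.of_bound 1 <| .of_forall fun n => by simp

lemma riemannZeta₀_eq_of_one_lt_re {s : ℂ} (hs : 1 < s.re) :
    riemannZeta₀ s = 1 - s * fractIntegral 1 s := by
  have hs1 : s - 1 ≠ 0 := fun h => by simp [sub_eq_zero.mp h] at hs
  have hpow : IntegrableOn (fun u : ℝ => (u : ℂ) ^ (-s)) (Set.Ioi 1) :=
    integrableOn_Ioi_cpow_of_lt (by simpa using hs) one_pos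
  have hsplit : ∫ u in Set.Ioi (1 : ℝ), (∑ _k ∈ Finset.Icc 1 ⌊u⌋₊, (1 : ℂ)) * (u : ℂ) ^ (-(s + 1)) =
      (∫ u in Set.Ioi (1 : ℝ), (u : ℂ) ^ (-s)) - fractIntegral 1 s := by
    rw [fractIntegral, ← integral_sub hpow (integrableOn_fract_mul_cpow one_pos (by linarith))]
    refine setIntegral_congr_fun measurableSet_Ioi fun u hu => ?_
    have hu0 : (u : ℂ) ≠ 0 := by exact_mod_cast (zero_lt_one.trans hu).ne'
    have hmul : (u : ℂ) ^ (-s) = u * (u : ℂ) ^ (-(s + 1)) := by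
      rw [show -s = 1 + -(s + 1) by ring, Complex.cpow_add _ _ hu0, Complex.cpow_one]
    rw [sum_Icc_one_floor_eq_sub_fract (zero_lt_one.trans hu).le, hmul]; ring
  have hint : ∫ u in Set.Ioi (1 : ℝ), (u : ℂ) ^ (-s) = (s - 1)⁻¹ := by
    rw [integral_Ioi_cpow_of_lt (by simpa using hs) one_pos, Complex.ofReal_one, Complex.one_cpow,
      neg_div, ← div_neg, neg_add, neg_neg, ← sub_eq_add_neg, one_div]
  have := riemannZeta_eq_inv_sub_add (sub_ne_zero.mp hs1)
  rw [riemannZeta_eq_mul_integral_floor hs, hsplit, hint] at this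
  rw [← sub_eq_iff_eq_add'.mpr this]
  field_simp
  ring

lemma riemannZeta₀_eq {s : ℂ} (hs : 0 < s.re) : riemannZeta₀ s = 1 - s * fractIntegral 1 s := by
  set U : Set ℂ := {z | 0 < z.re}
  have hUo : IsOpen U := isOpen_lt continuous_const Complex.continuous_re
  have hfract : DifferentiableOn ℂ (fun z => 1 - z * fractIntegral 1 z) U := fun z hz =>
    ((differentiableAt_id.mul (differentiableAt_fractIntegral one_pos hz)).const_sub
      1).differentiableWithinAt
  have heq : riemannZeta₀ =ᶠ[𝓝 2] fun z => 1 - z * fractIntegral 1 z := by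
    filter_upwards [(isOpen_lt continuous_const Complex.continuous_re).mem_nhds
      (show (1 : ℝ) < (2 : ℂ).re by simp)] with z hz using riemannZeta₀_eq_of_one_lt_re hz
  exact (differentiable_riemannZeta₀.differentiableOn.analyticOnNhd hUo
    ).eqOn_of_preconnected_of_eventuallyEq (hfract.analyticOnNhd hUo)
    (convex_halfSpace_re_gt 0).isPreconnected (by simp [U]) heq hs

lemma hasDerivAt_sub_mul_cpow_antideriv (c : ℂ) {s : ℂ} (hs0 : s ≠ 0) (hs1 : s ≠ 1) {u : ℝ}
    (hu : 0 < u) :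
    HasDerivAt (fun v : ℝ => (v : ℂ) ^ (1 - s) / (1 - s) - (v - c) * (v : ℂ) ^ (-s))
      (s * ((u - c) * (u : ℂ) ^ (-(s + 1)))) u := by
  have h1s : 1 - s ≠ 0 := sub_ne_zero.mpr hs1.symm
  have hpow₁ := (hasDerivAt_ofReal_cpow_const hu.ne' h1s).div_const (1 - s)
  have hpow := hasDerivAt_ofReal_cpow_const hu.ne' (neg_ne_zero.mpr hs0)
  have hlin : HasDerivAt (fun v : ℝ => (v : ℂ) - c) 1 u := (hasDerivAt_id u).ofReal_comp.sub_const c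
  refine (hpow₁.sub (hlin.mul hpow)).congr_deriv ?_
  rw [show 1 - s - 1 = -s by ring, show -s - 1 = -(s + 1) by ring]
  field_simp
  ring

lemma mul_fractIntegral_natCast_sub {N : ℕ} (hN : 0 < N) {s : ℂ} (hs : 0 < s.re) (hs1 : s ≠ 1) :
    s * (fractIntegral N s - fractIntegral (N + 1 : ℕ) s) =
      ((N : ℂ) ^ (1 - s) - (N + 1 : ℕ) ^ (1 - s)) / (s - 1) - ((N + 1 : ℕ) : ℂ) ^ (-s) := by
  have hN0 : (0 : ℝ) < N := by exact_mod_cast hN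
  have hle : (N : ℝ) ≤ (N + 1 : ℕ) := by simp
  have hs0 : s ≠ 0 := fun h => by simp [h] at hs
  have h1s : 1 - s ≠ 0 := sub_ne_zero.mpr hs1.symm
  have hpos {u : ℝ} (hu : u ∈ Set.uIcc (N : ℝ) (N + 1 : ℕ)) : 0 < u :=
    hN0.trans_le (Set.uIcc_of_le hle ▸ hu).1
  have hfract : Set.EqOn (fun u : ℝ => ((Int.fract u : ℝ) : ℂ) * (u : ℂ) ^ (-(s + 1)))
      (fun u => (u - (N : ℂ)) * (u : ℂ) ^ (-(s + 1))) (Set.Ioo N (N + 1 : ℕ)) := by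
    intro u hu
    have hfloor : ⌊u⌋ = N := Int.floor_eq_iff.mpr ⟨by simpa using hu.1.le, by simpa using hu.2⟩
    simp [Int.fract, hfloor]
  rw [fractIntegral, fractIntegral,
    intervalIntegral.integral_Ioi_sub_Ioi (integrableOn_fract_mul_cpow hN0 hs) hle,
    intervalIntegral.integral_congr_Ioo_of_le hle hfract, ← intervalIntegral.integral_const_mul,
    intervalIntegral.integral_eq_sub_of_hasDerivAt
      (fun u hu => hasDerivAt_sub_mul_cpow_antideriv N hs0 hs1 (hpos hu))]
  · push_cast
    rw [← neg_sub 1 s]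
    field_simp
    ring
  · refine ContinuousOn.intervalIntegrable fun u hu => ContinuousAt.continuousWithinAt ?_
    have := Complex.continuousAt_ofReal_cpow_const u (-(s + 1)) (Or.inr (hpos hu).ne')
    fun_prop

lemma riemannZeta_eq_sum_add {N : ℕ} (hN : 0 < N) {s : ℂ} (hs : 0 < s.re) (hs1 : s ≠ 1) :
    riemannZeta s = ∑ n ∈ Finset.Icc 1 N, (n : ℂ) ^ (-s) + (N : ℂ) ^ (1 - s) / (s - 1) -
      s * fractIntegral N s := by
  induction N, hN using Nat.le_induction with
  | base =>
    simp only [Finset.Icc_self, Finset.sum_singleton, Nat.cast_one, Complex.one_cpow,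
      riemannZeta_eq_inv_sub_add hs1, riemannZeta₀_eq hs]
    ring
  | succ N hN ih =>
    rw [Finset.sum_Icc_succ_top (by omega), ih]
    linear_combination -mul_fractIntegral_natCast_sub hN hs hs1

lemma norm_riemannZeta₀_le {s : ℂ} (hs : 0 < s.re) : ‖riemannZeta₀ s‖ ≤ 1 + ‖s‖ / s.re := by
  have hJ := norm_fractIntegral_le one_pos hs
  rw [one_rpow] at hJ
  calc ‖riemannZeta₀ s‖ ≤ ‖(1 : ℂ)‖ + ‖s * fractIntegral 1 s‖ := by
        rw [riemannZeta₀_eq hs]; exact norm_sub_le _ _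
    _ ≤ 1 + ‖s‖ * (1 / s.re) := by rw [norm_one, norm_mul]; gcongr
    _ = 1 + ‖s‖ / s.re := by ring

lemma norm_riemannZeta_one_add_le {x : ℝ} (hx0 : 0 < x) (hx1 : x ≤ 1) :
    ‖riemannZeta (1 + x)‖ ≤ 3 / x := by
  have hne : (1 : ℂ) + x ≠ 1 := by simpa using hx0.ne'
  have hre : (1 + (x : ℂ)).re = 1 + x := by simp
  have hnorm : ‖1 + (x : ℂ)‖ = 1 + x := by
    rw [← Complex.ofReal_one, ← Complex.ofReal_add, Complex.norm_of_nonneg (by positivity)]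
  have hζ₀ := norm_riemannZeta₀_le (s := 1 + x) (by rw [hre]; positivity)
  rw [hre, hnorm, div_self (by positivity)] at hζ₀
  calc ‖riemannZeta (1 + x)‖ ≤ ‖(x : ℂ)⁻¹‖ + ‖riemannZeta₀ (1 + x)‖ := by
        rw [riemannZeta_eq_inv_sub_add hne, add_sub_cancel_left]; exact norm_add_le _ _
    _ ≤ 1 / x + (1 + 1) := by
        gcongr
        rw [norm_inv, Complex.norm_of_nonneg hx0.le, one_div]
    _ ≤ 3 / x := by
        have := one_le_one_div hx0 hx1
        linear_combination 2 * this

lemma add_one_le_of_le_log {a x : ℝ} (ha : 0 < a) (hx : 0 ≤ x) (h : a ≤ log x) : a + 1 ≤ x := by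
  have hx0 : 0 < x := hx.lt_of_ne fun h0 => by rw [← h0, log_zero] at h; linarith
  exact (add_one_le_exp a).trans ((le_log_iff_exp_le hx0).mp h)

lemma rpow_le_exp_one {x T b : ℝ} (hx : 1 ≤ x) (hxT : x ≤ T) (hT : 1 < T) (hb : b ≤ (log T)⁻¹) :
    x ^ b ≤ exp 1 :=
  calc x ^ b ≤ x ^ (log T)⁻¹ := rpow_le_rpow_of_exponent_le hx hb
    _ ≤ T ^ (log T)⁻¹ := by
        have := log_pos hT
        gcongr
    _ = exp 1 := rpow_inv_log (by positivity) hT.ne'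

lemma norm_sum_Icc_cpow_neg_le {N : ℕ} {T : ℝ} {s : ℂ} (hT : 1 < T) (hNT : N ≤ T)
    (hσ : 1 - (log T)⁻¹ ≤ s.re) :
    ‖∑ n ∈ Finset.Icc 1 N, (n : ℂ) ^ (-s)‖ ≤ exp 1 * (1 + log N) := by
  have hterm : ∀ n ∈ Finset.Icc 1 N, ‖(n : ℂ) ^ (-s)‖ ≤ exp 1 * (n : ℝ)⁻¹ := by
    intro n hn
    obtain ⟨hn1, hnN⟩ := Finset.mem_Icc.mp hn
    have hn1' : (1 : ℝ) ≤ n := by exact_mod_cast hn1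
    have hnT : (n : ℝ) ≤ T := le_trans (by exact_mod_cast hnN) hNT
    rw [Complex.norm_natCast_cpow_of_pos hn1, Complex.neg_re,
      show -s.re = (1 - s.re) + -1 by ring, rpow_add (by positivity), rpow_neg_one]
    gcongr
    exact rpow_le_exp_one hn1' hnT hT (by linarith)
  calc ‖∑ n ∈ Finset.Icc 1 N, (n : ℂ) ^ (-s)‖
      ≤ ∑ n ∈ Finset.Icc 1 N, exp 1 * (n : ℝ)⁻¹ := norm_sum_le_of_le _ hterm
    _ = exp 1 * (harmonic N : ℝ) := by rw [← Finset.mul_sum, harmonic_eq_sum_Icc]; push_cast; rfl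
    _ ≤ exp 1 * (1 + log N) := by gcongr; exact harmonic_le_one_add_log N

lemma norm_cpow_div_le {N : ℕ} {s : ℂ} (hN : 0 < N) (ht : 2 ≤ log |s.im|) (hNt : N ≤ |s.im|)
    (hσ : 1 - (log |s.im|)⁻¹ ≤ s.re) : ‖(N : ℂ) ^ (1 - s) / (s - 1)‖ ≤ exp 1 := by
  have hT : 3 ≤ |s.im| := by linarith [add_one_le_of_le_log two_pos (abs_nonneg _) ht]
  have him : |s.im| ≤ ‖s - 1‖ := by simpa using Complex.abs_im_le_norm (s - 1)
  rw [norm_div, Complex.norm_natCast_cpow_of_pos hN]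
  refine (div_le_self (by positivity) (by linarith)).trans ?_
  refine rpow_le_exp_one (by exact_mod_cast hN) hNt (by linarith) ?_
  rw [Complex.sub_re, Complex.one_re]
  linarith

lemma norm_mul_fractIntegral_le {N : ℕ} {s : ℂ} (hN : 0 < N) (ht : 2 ≤ log |s.im|)
    (hNt : N ≤ |s.im|) (htN : |s.im| ≤ 2 * N) (hσ : 1 - (log |s.im|)⁻¹ ≤ s.re) :
    ‖s * fractIntegral N s‖ ≤ 5 * exp 1 := by
  have hT : 3 ≤ |s.im| := by linarith [add_one_le_of_le_log two_pos (abs_nonneg _) ht]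
  have hN1 : (1 : ℝ) ≤ N := by exact_mod_cast hN
  have hre : 1 / 2 ≤ s.re := by
    have : (log |s.im|)⁻¹ ≤ 2⁻¹ := by gcongr
    linarith
  have hre0 : 0 < s.re := by linarith
  have hpow : (N : ℝ) ^ (-s.re) ≤ exp 1 / N := by
    rw [show -s.re = (1 - s.re) - 1 by ring, rpow_sub_one (by positivity)]
    gcongr
    exact rpow_le_exp_one hN1 hNt (by linarith) (by linarith)
  have hnorm : ‖s‖ ≤ 5 * N * s.re := by
    have := Complex.norm_le_abs_re_add_abs_im s
    rw [abs_of_pos hre0] at this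
    nlinarith
  calc ‖s * fractIntegral N s‖ ≤ (5 * N * s.re) * (exp 1 / N / s.re) := by
        rw [norm_mul]
        gcongr
        exact (norm_fractIntegral_le (by positivity) hre0).trans (by gcongr)
    _ = 5 * exp 1 := by field_simp

theorem norm_riemannZeta_le_log {s : ℂ} (ht : 2 ≤ log |s.im|) (hσ : 1 - (log |s.im|)⁻¹ ≤ s.re) :
    ‖riemannZeta s‖ ≤ 15 * log |s.im| := by
  have hT : 3 ≤ |s.im| := by linarith [add_one_le_of_le_log two_pos (abs_nonneg _) ht]
  have hs1 : s ≠ 1 := by rintro rfl; norm_num at hT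
  have hre : 0 < s.re := by
    have : (log |s.im|)⁻¹ ≤ 2⁻¹ := by gcongr
    linarith
  set N := ⌊|s.im|⌋₊
  have hNt : (N : ℝ) ≤ |s.im| := Nat.floor_le (abs_nonneg _)
  have htN : |s.im| ≤ 2 * N := by linarith [Nat.lt_floor_add_one |s.im|]
  have hN : 0 < N := Nat.floor_pos.mpr (by linarith)
  calc ‖riemannZeta s‖ ≤ exp 1 * (1 + log N) + exp 1 + 5 * exp 1 := by
        rw [riemannZeta_eq_sum_add hN hre hs1]
        exact norm_sub_le_of_le (norm_add_le_of_le
          (norm_sum_Icc_cpow_neg_le (by linarith) hNt hσ) (norm_cpow_div_le hN ht hNt hσ))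
          (norm_mul_fractIntegral_le hN ht hNt htN hσ)
    _ = exp 1 * (7 + log N) := by ring
    _ ≤ 3 * (5 * log |s.im|) := by
        have : log N ≤ log |s.im| := log_le_log (by exact_mod_cast hN) hNt
        gcongr
        · exact exp_one_lt_three.le
        · linarith
    _ = 15 * log |s.im| := by ring

lemma log_abs_im_mem_Icc_of_norm_sub_le_one {s z : ℂ} {a : ℝ} (ha : 0 ≤ a)
    (ht : a + 1 ≤ log |s.im|) (hz : ‖z - s‖ ≤ 1) : log |z.im| ∈ Set.Icc a (2 * log |s.im|) := by
  have hT : 2 ≤ |s.im| := by linarith [add_one_le_of_le_log (by linarith) (abs_nonneg _) ht]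
  have him := abs_le.mp <| (abs_abs_sub_abs_le_abs_sub z.im s.im).trans <|
    (Complex.abs_im_le_norm (z - s)).trans hz
  have hexp : exp a + 1 ≤ |s.im| :=
    calc exp a + 1 ≤ exp a * exp 1 := by nlinarith [add_one_le_exp 1, one_le_exp ha]
      _ = exp (a + 1) := (exp_add a 1).symm
      _ ≤ |s.im| := (le_log_iff_exp_le (by linarith)).mp ht
  have hzpos : 0 < |z.im| := by linarith [exp_pos a]
  constructor
  · rw [le_log_iff_exp_le hzpos]
    linarith
  · calc log |z.im| ≤ log (|s.im| ^ 2) := log_le_log hzpos (by nlinarith)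
      _ = 2 * log |s.im| := by simp

theorem norm_deriv_riemannZeta_le_log {s : ℂ} (ht : 3 ≤ log |s.im|)
    (hσ : 1 - (4 * log |s.im|)⁻¹ ≤ s.re) : ‖deriv riemannZeta s‖ ≤ 120 * log |s.im| ^ 2 := by
  set r := (4 * log |s.im|)⁻¹ with hr
  have hr0 : 0 < r := by positivity
  have hr1 : r ≤ 1 := inv_le_one_of_one_le₀ (by linarith)
  have hsphere : ∀ z ∈ Metric.sphere s r, ‖riemannZeta z‖ ≤ 30 * log |s.im| := by
    intro z hz
    rw [mem_sphere_iff_norm] at hz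
    obtain ⟨hlog2, hlog⟩ := log_abs_im_mem_Icc_of_norm_sub_le_one (a := 2) (by norm_num)
      (by linarith) (hz.trans_le hr1)
    have hre := (abs_le.mp ((Complex.abs_re_le_norm (z - s)).trans hz.le)).1
    have hinv : 2 * r ≤ (log |z.im|)⁻¹ := by
      calc 2 * r = (2 * log |s.im|)⁻¹ := by rw [hr]; field_simp; norm_num
        _ ≤ (log |z.im|)⁻¹ := by gcongr
    rw [Complex.sub_re] at hre
    exact (norm_riemannZeta_le_log hlog2 (by linarith)).trans (by linarith)
  have hdiff : DiffContOnCl ℂ riemannZeta (Metric.ball s r) := by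
    refine DifferentiableOn.diffContOnCl fun z hz =>
      (differentiableAt_riemannZeta ?_).differentiableWithinAt
    rw [closure_ball _ hr0.ne', mem_closedBall_iff_norm] at hz
    have := (log_abs_im_mem_Icc_of_norm_sub_le_one (a := 2) (by norm_num) (by linarith)
      (hz.trans hr1)).1
    rintro rfl
    norm_num at this
  refine (Complex.norm_deriv_le_of_forall_mem_sphere_norm_le hr0 hdiff hsphere).trans_eq ?_
  rw [hr]; field_simp; norm_num

lemma one_le_norm_riemannZeta_prod {x : ℝ} (hx : 0 < x) (y : ℝ) :
    1 ≤ ‖riemannZeta (1 + x)‖ ^ 3 * ‖riemannZeta (1 + x + Complex.I * y)‖ ^ 4 *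
      ‖riemannZeta (1 + x + 2 * Complex.I * y)‖ := by
  simpa only [DirichletCharacter.LFunctionTrivChar, DirichletCharacter.LFunction_modOne_eq,
    norm_mul, norm_pow] using DirichletCharacter.norm_LFunction_product_ge_one (N := 1) 1 hx y

lemma pow_div_log_le_norm_riemannZeta_pow {s : ℂ} (ht : 2 ≤ log |s.im|) (h1 : 1 < s.re)
    (h2 : s.re ≤ 2) : (s.re - 1) ^ 3 / (810 * log |s.im|) ≤ ‖riemannZeta s‖ ^ 4 := by
  have hT : 3 ≤ |s.im| := by linarith [add_one_le_of_le_log two_pos (abs_nonneg _) ht]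
  set x := s.re - 1
  have hx : 0 < x := sub_pos.mpr h1
  have hs : 1 + (x : ℂ) + Complex.I * s.im = s := by
    apply Complex.ext <;> simp [x]
  set w : ℂ := 1 + x + 2 * Complex.I * s.im
  have hw : |w.im| = 2 * |s.im| := by simp [w, abs_mul]
  have hlogw : log |w.im| ≤ 2 * log |s.im| := by
    calc log |w.im| ≤ log (|s.im| ^ 2) := by rw [hw]; exact log_le_log (by linarith) (by nlinarith)
      _ = 2 * log |s.im| := by simp
  have hlogw2 : 2 ≤ log |w.im| := ht.trans <| by
    rw [hw]; exact log_le_log (by linarith) (by linarith)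
  have hζw : ‖riemannZeta w‖ ≤ 30 * log |s.im| := by
    refine (norm_riemannZeta_le_log hlogw2 ?_).trans (by linarith)
    have : 0 ≤ (log |w.im|)⁻¹ := by positivity
    have hwre : w.re = 1 + x := by simp [w]
    linarith
  have hζx := norm_riemannZeta_one_add_le hx (by linarith)
  have h341 := one_le_norm_riemannZeta_prod hx s.im
  rw [hs] at h341
  rw [div_le_iff₀ (by positivity)]
  calc x ^ 3 ≤ x ^ 3 * ((3 / x) ^ 3 * ‖riemannZeta s‖ ^ 4 * (30 * log |s.im|)) := by
        refine le_mul_of_one_le_right (by positivity) (h341.trans ?_)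
        gcongr
    _ = ‖riemannZeta s‖ ^ 4 * (810 * log |s.im|) := by field_simp; ring

lemma div_log_pow_le_norm_riemannZeta_of_one_add_le {s : ℂ} {δ : ℝ} (hδ : 0 < δ)
    (hδ' : 810 * 480 ^ 4 * δ ≤ 1) (ht : 3 ≤ log |s.im|) (h1 : 1 + δ / log |s.im| ^ 9 ≤ s.re)
    (h2 : s.re ≤ 2) : 480 * δ / log |s.im| ^ 7 ≤ ‖riemannZeta s‖ := by
  set ℓ := log |s.im|
  have hx : 0 < δ / ℓ ^ 9 := by positivity
  refine (pow_le_pow_iff_left₀ (by positivity) (norm_nonneg _) four_ne_zero).mp ?_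
  calc (480 * δ / ℓ ^ 7) ^ 4 = (810 * 480 ^ 4 * δ) * (δ ^ 3 / (810 * ℓ ^ 28)) := by
        field_simp
    _ ≤ 1 * (δ ^ 3 / (810 * ℓ ^ 28)) := by gcongr
    _ = (δ / ℓ ^ 9) ^ 3 / (810 * ℓ) := by field_simp
    _ ≤ (s.re - 1) ^ 3 / (810 * ℓ) := by gcongr; linarith
    _ ≤ ‖riemannZeta s‖ ^ 4 :=
        pow_div_log_le_norm_riemannZeta_pow (by linarith) (by linarith) h2

lemma norm_riemannZeta_sub_le_of_im_eq {s z : ℂ} (him : z.im = s.im) (ht : 3 ≤ log |s.im|)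
    (hs : 1 - (4 * log |s.im|)⁻¹ ≤ s.re) (hz : s.re ≤ z.re) :
    ‖riemannZeta z - riemannZeta s‖ ≤ 120 * log |s.im| ^ 2 * (z.re - s.re) := by
  have hseg : ∀ w ∈ segment ℝ s z, w.im = s.im ∧ s.re ≤ w.re := by
    intro w hw
    have hre : s.re ≤ w.re :=
      (convex_halfSpace_re_ge s.re).segment_subset (le_refl s.re) hz hw
    have himw : w.im = s.im :=
      (convex_hyperplane (Complex.imLm.isLinear) s.im).segment_subset rfl him hw
    exact ⟨himw, hre⟩
  have hnorm : ‖z - s‖ = z.re - s.re := by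
    have : z - s = ((z.re - s.re : ℝ) : ℂ) := by apply Complex.ext <;> simp [him]
    rw [this, Complex.norm_of_nonneg (sub_nonneg.mpr hz)]
  rw [← hnorm]
  refine (convex_segment s z).norm_image_sub_le_of_norm_deriv_le (fun w hw => ?_)
    (fun w hw => ?_) (left_mem_segment ℝ s z) (right_mem_segment ℝ s z)
  · refine differentiableAt_riemannZeta fun h => ?_
    rw [← (hseg w hw).1, h] at ht
    norm_num at ht
  · obtain ⟨himw, hre⟩ := hseg w hw
    rw [← himw] at ht hs ⊢
    exact norm_deriv_riemannZeta_le_log ht (hs.trans hre)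

/-- A part of the classical zero-free region of `ζ`: the points `s = σ + it` with
`log |t| ≥ 3` and `1 - δ / (log |t|)^9 ≤ σ ≤ 2`. -/
def zeroFreeRegion (δ : ℝ) : Set ℂ :=
  {s | 3 ≤ log |s.im| ∧ 1 - δ / log |s.im| ^ 9 ≤ s.re ∧ s.re ≤ 2}

lemma div_log_pow_le_inv_four_mul_log {s : ℂ} {δ : ℝ} (hδ' : 810 * 480 ^ 4 * δ ≤ 1)
    (ht : 3 ≤ log |s.im|) : δ / log |s.im| ^ 9 ≤ (4 * log |s.im|)⁻¹ := by
  have : (1 : ℝ) ≤ log |s.im| ^ 8 := one_le_pow₀ (by linarith)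
  rw [div_le_iff₀ (by positivity), inv_mul_eq_div, le_div_iff₀ (by positivity)]
  nlinarith

/-- The exponents balance the 3-4-1 lower bound at distance `δ / (log |t|)^9` to the right of the
line `Re s = 1` against the variation of `ζ` over that distance. -/
theorem div_log_pow_le_norm_riemannZeta {s : ℂ} {δ : ℝ} (hδ : 0 < δ)
    (hδ' : 810 * 480 ^ 4 * δ ≤ 1) (hs : s ∈ zeroFreeRegion δ) :
    δ / log |s.im| ^ 7 ≤ ‖riemannZeta s‖ := by
  obtain ⟨ht, h1, h2⟩ := hs
  have hxℓ := div_log_pow_le_inv_four_mul_log hδ' ht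
  set ℓ := log |s.im|
  set x := δ / ℓ ^ 9 with hx
  have hδx : δ / ℓ ^ 7 = x * ℓ ^ 2 := by rw [hx]; field_simp
  rcases le_total (1 + x) s.re with hs | hs
  · refine le_trans ?_ (div_log_pow_le_norm_riemannZeta_of_one_add_le hδ hδ' ht hs h2)
    gcongr
    linarith
  have hright : 480 * δ / ℓ ^ 7 ≤ ‖riemannZeta ⟨1 + x, s.im⟩‖ := by
    have : x ≤ 1 := hxℓ.trans (inv_le_one_of_one_le₀ (by linarith))
    exact div_log_pow_le_norm_riemannZeta_of_one_add_le (s := ⟨1 + x, s.im⟩) hδ hδ' ht le_rfl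
      (by linarith)
  have hvar : ‖riemannZeta ⟨1 + x, s.im⟩ - riemannZeta s‖ ≤ 240 * (x * ℓ ^ 2) :=
    calc _ ≤ 120 * ℓ ^ 2 * (1 + x - s.re) :=
          norm_riemannZeta_sub_le_of_im_eq (z := ⟨1 + x, s.im⟩) rfl ht (by linarith) hs
      _ ≤ 120 * ℓ ^ 2 * (2 * x) := by gcongr; linarith
      _ = 240 * (x * ℓ ^ 2) := by ring
  have := norm_sub_norm_le (riemannZeta ⟨1 + x, s.im⟩) (riemannZeta s)
  have : 0 ≤ x * ℓ ^ 2 := by positivity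
  rw [mul_div_assoc, hδx] at hright
  linarith

/-! ### The logarithmic derivative of `ζ` near the line `Re s = 1` -/

/-- The analytic continuation of the Laplace transform of `y ↦ ∫_0^y (ψ(e^u) - e^u) du`. -/
noncomputable def psiLaplace (s : ℂ) : ℂ := -(logDeriv riemannZeta₁ s + 1) / s ^ 2

lemma riemannZeta₁_eq_sub_mul {s : ℂ} (hs : s ≠ 1) : riemannZeta₁ s = (s - 1) * riemannZeta s := by
  rw [riemannZeta_eq_inv_sub_mul hs, mul_inv_cancel_left₀ (sub_ne_zero.mpr hs)]

lemma riemannZeta₁_ne_zero_of_one_le_re {s : ℂ} (hs : 1 ≤ s.re) : riemannZeta₁ s ≠ 0 := by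
  rcases eq_or_ne s 1 with rfl | h
  · simp
  · rw [riemannZeta₁_eq_sub_mul h]
    exact mul_ne_zero (sub_ne_zero.mpr h) (riemannZeta_ne_zero_of_one_le_re hs)

lemma logDeriv_riemannZeta₁ {s : ℂ} (hs : s ≠ 1) (hζ : riemannZeta s ≠ 0) :
    logDeriv riemannZeta₁ s = (s - 1)⁻¹ + logDeriv riemannZeta s := by
  have heq : riemannZeta₁ =ᶠ[𝓝 s] fun z => (z - 1) * riemannZeta z := by
    filter_upwards [isOpen_ne.mem_nhds hs] with z hz using riemannZeta₁_eq_sub_mul hz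
  rw [(logDeriv_congr_nhds heq).eq_of_nhds,
    logDeriv_mul (f := fun z => z - 1) s (sub_ne_zero.mpr hs) hζ (by fun_prop)
      (differentiableAt_riemannZeta hs), logDeriv_apply]
  simp

lemma analyticOnNhd_psiLaplace :
    AnalyticOnNhd ℂ psiLaplace {s | riemannZeta₁ s ≠ 0 ∧ s ≠ 0} := by
  intro s ⟨hζ, hs⟩
  have hana := differentiable_riemannZeta₁.analyticAt s
  exact ((hana.deriv.div hana hζ).add analyticAt_const).neg.div (analyticAt_id.pow 2)
    (pow_ne_zero 2 hs)

lemma analyticAt_psiLaplace_of_one_le_re {s : ℂ} (hs : 1 ≤ s.re) : AnalyticAt ℂ psiLaplace s :=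
  analyticOnNhd_psiLaplace s ⟨riemannZeta₁_ne_zero_of_one_le_re hs,
    fun h => by norm_num [h] at hs⟩

section

variable {s : ℂ} {δ : ℝ}

lemma ne_one_of_mem_zeroFreeRegion (hs : s ∈ zeroFreeRegion δ) : s ≠ 1 := by
  rintro rfl
  norm_num [zeroFreeRegion] at hs

lemma riemannZeta_ne_zero_of_mem_zeroFreeRegion (hδ : 0 < δ) (hδ' : 810 * 480 ^ 4 * δ ≤ 1)
    (hs : s ∈ zeroFreeRegion δ) : riemannZeta s ≠ 0 := by
  have ht : 3 ≤ log |s.im| := hs.1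
  rw [← norm_pos_iff]
  exact (by positivity : 0 < δ / log |s.im| ^ 7).trans_le
    (div_log_pow_le_norm_riemannZeta hδ hδ' hs)

lemma analyticAt_psiLaplace_of_mem_zeroFreeRegion (hδ : 0 < δ) (hδ' : 810 * 480 ^ 4 * δ ≤ 1)
    (hs : s ∈ zeroFreeRegion δ) : AnalyticAt ℂ psiLaplace s := by
  refine analyticOnNhd_psiLaplace s ⟨?_, ?_⟩
  · have hs1 := ne_one_of_mem_zeroFreeRegion hs
    rw [riemannZeta₁_eq_sub_mul hs1]
    exact mul_ne_zero (sub_ne_zero.mpr hs1) (riemannZeta_ne_zero_of_mem_zeroFreeRegion hδ hδ' hs)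
  · rintro rfl
    norm_num [zeroFreeRegion] at hs

lemma norm_logDeriv_riemannZeta_le (hδ : 0 < δ) (hδ' : 810 * 480 ^ 4 * δ ≤ 1)
    (hs : s ∈ zeroFreeRegion δ) : ‖logDeriv riemannZeta s‖ ≤ 120 / δ * log |s.im| ^ 9 := by
  obtain ⟨ht, h1, -⟩ := id hs
  have hσ : 1 - (4 * log |s.im|)⁻¹ ≤ s.re := by
    linarith [div_log_pow_le_inv_four_mul_log hδ' ht]
  calc ‖logDeriv riemannZeta s‖ = ‖deriv riemannZeta s‖ / ‖riemannZeta s‖ := by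
        rw [logDeriv_apply, norm_div]
    _ ≤ 120 * log |s.im| ^ 2 / (δ / log |s.im| ^ 7) := by
        gcongr
        · exact norm_deriv_riemannZeta_le_log ht hσ
        · exact div_log_pow_le_norm_riemannZeta hδ hδ' hs
    _ = 120 / δ * log |s.im| ^ 9 := by field_simp

lemma norm_psiLaplace_le (hδ : 0 < δ) (hδ' : 810 * 480 ^ 4 * δ ≤ 1) (hs : s ∈ zeroFreeRegion δ) :
    ‖psiLaplace s‖ ≤ 122 / δ * log |s.im| ^ 9 / |s.im| ^ 2 := by
  have ht : 3 ≤ log |s.im| := hs.1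
  have hT : 4 ≤ |s.im| := by linarith [add_one_le_of_le_log three_pos (abs_nonneg _) ht]
  have hs1 := ne_one_of_mem_zeroFreeRegion hs
  have hinv : ‖(s - 1)⁻¹‖ ≤ 1 := by
    have him : |s.im| ≤ ‖s - 1‖ := by simpa using Complex.abs_im_le_norm (s - 1)
    rw [norm_inv]
    exact inv_le_one_of_one_le₀ (by linarith)
  have hone : 1 ≤ δ⁻¹ * log |s.im| ^ 9 := one_le_mul_of_one_le_of_one_le
    ((one_le_inv₀ hδ).mpr (by linarith)) (one_le_pow₀ (by linarith))
  have hnum : ‖logDeriv riemannZeta₁ s + 1‖ ≤ 122 / δ * log |s.im| ^ 9 := by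
    rw [logDeriv_riemannZeta₁ hs1 (riemannZeta_ne_zero_of_mem_zeroFreeRegion hδ hδ' hs)]
    calc ‖(s - 1)⁻¹ + logDeriv riemannZeta s + 1‖ ≤ 1 + 120 / δ * log |s.im| ^ 9 + 1 :=
          norm_add_le_of_le (norm_add_le_of_le hinv (norm_logDeriv_riemannZeta_le hδ hδ' hs))
            norm_one.le
      _ ≤ 122 / δ * log |s.im| ^ 9 := by
          linear_combination 2 * hone
  rw [psiLaplace, norm_div, norm_neg, norm_pow]
  gcongr
  exact Complex.abs_im_le_norm s

end

lemma mem_zeroFreeRegion_of_norm_sub_le {s z : ℂ} {δ : ℝ} (hδ : 0 < δ) (hδ' : 810 * 480 ^ 4 * δ ≤ 1)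
    (ht : 4 ≤ log |s.im|) (h1 : 1 ≤ s.re) (h2 : s.re ≤ 3 / 2)
    (hz : ‖z - s‖ ≤ δ / (2 * log |s.im|) ^ 9) : z ∈ zeroFreeRegion δ := by
  have hr : δ / (2 * log |s.im|) ^ 9 ≤ 1 / 2 :=
    (div_le_self hδ.le (one_le_pow₀ (by linarith))).trans (by linarith)
  obtain ⟨hlog3, hlog⟩ := log_abs_im_mem_Icc_of_norm_sub_le_one (a := 3) (by norm_num)
    (by linarith) (hz.trans (by linarith))
  obtain ⟨hre, hre'⟩ := abs_le.mp ((Complex.abs_re_le_norm (z - s)).trans hz)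
  rw [Complex.sub_re] at hre hre'
  have hδz : δ / (2 * log |s.im|) ^ 9 ≤ δ / log |z.im| ^ 9 := by gcongr
  exact ⟨hlog3, by linarith, by linarith⟩

lemma norm_iteratedDeriv_psiLaplace_le {δ : ℝ} (hδ : 0 < δ) (hδ' : 810 * 480 ^ 4 * δ ≤ 1) (k : ℕ)
    {s : ℂ} (ht : 4 ≤ log |s.im|) (h1 : 1 ≤ s.re) (h2 : s.re ≤ 3 / 2) :
    ‖iteratedDeriv k psiLaplace s‖ ≤
      k.factorial * 488 * ((2 * log |s.im|) ^ 9 / δ) ^ (k + 1) / |s.im| ^ 2 := by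
  set r := δ / (2 * log |s.im|) ^ 9 with hr
  have hr0 : 0 < r := by positivity
  have hr1 : r ≤ 1 := (div_le_self hδ.le (one_le_pow₀ (by linarith))).trans (by linarith)
  have hT : 4 ≤ |s.im| := by linarith [add_one_le_of_le_log four_pos (abs_nonneg _) ht]
  have hmem {z : ℂ} (hz : ‖z - s‖ ≤ r) : z ∈ zeroFreeRegion δ :=
    mem_zeroFreeRegion_of_norm_sub_le hδ hδ' ht h1 h2 hz
  have hdiff : DiffContOnCl ℂ psiLaplace (Metric.ball s r) := by
    refine DifferentiableOn.diffContOnCl fun z hz => ?_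
    rw [closure_ball _ hr0.ne', mem_closedBall_iff_norm] at hz
    exact (analyticAt_psiLaplace_of_mem_zeroFreeRegion hδ hδ'
      (hmem hz)).differentiableAt.differentiableWithinAt
  have hsphere : ∀ z ∈ Metric.sphere s r,
      ‖psiLaplace z‖ ≤ 122 / δ * (2 * log |s.im|) ^ 9 / (|s.im| / 2) ^ 2 := by
    intro z hz
    rw [mem_sphere_iff_norm] at hz
    obtain ⟨hlog3, hlog⟩ := log_abs_im_mem_Icc_of_norm_sub_le_one (a := 3) (by norm_num)
      (by linarith) (hz.trans_le hr1)
    have him := abs_le.mp <| (abs_abs_sub_abs_le_abs_sub z.im s.im).trans <|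
      (Complex.abs_im_le_norm (z - s)).trans (hz.trans_le hr1)
    refine (norm_psiLaplace_le hδ hδ' (hmem hz.le)).trans ?_
    gcongr
    linarith
  refine (Complex.norm_iteratedDeriv_le_of_forall_mem_sphere_norm_le k hr0 hdiff
    hsphere).trans_eq ?_
  rw [hr]
  have hP : (2 * log |s.im|) ^ 9 ≠ 0 := by positivity
  generalize (2 * log |s.im|) ^ 9 = P at hP
  rw [div_pow δ, div_pow P]
  field_simp
  ring

lemma continuousOn_iteratedDeriv_psiLaplace (k : ℕ) :
    ContinuousOn (iteratedDeriv k psiLaplace) {s | 1 ≤ s.re} := by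
  have hana : AnalyticOnNhd ℂ psiLaplace {s | 1 ≤ s.re} := fun s hs =>
    analyticAt_psiLaplace_of_one_le_re hs
  rw [iteratedDeriv_eq_iterate]
  exact (hana.iterated_deriv k).continuousOn

lemma exists_norm_iteratedDeriv_psiLaplace_le_of_abs_im_ge (k : ℕ) :
    ∃ T C, ∀ s : ℂ, 1 ≤ s.re → s.re ≤ 3 / 2 → T ≤ |s.im| →
      ‖iteratedDeriv k psiLaplace s‖ ≤ C * (1 + |s.im|) ^ (-(3 / 2 : ℝ)) := by
  set δ : ℝ := 1 / (810 * 480 ^ 4) with hδ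
  set n := 9 * (k + 1)
  set C : ℝ := k.factorial * 488 * (2 ^ 9 / δ) ^ (k + 1)
  have hlittle : ∀ᶠ x : ℝ in atTop, log x ^ n ≤ x ^ (1 / 2 : ℝ) := by
    filter_upwards [(isLittleO_log_rpow_rpow_atTop (n : ℝ) one_half_pos).bound one_pos,
      eventually_ge_atTop 1] with x hx hx1
    rwa [one_mul, norm_of_nonneg (by positivity [log_nonneg hx1]), rpow_natCast,
      norm_of_nonneg (by positivity)] at hx
  obtain ⟨T, hT⟩ := eventually_atTop.mp <| hlittle.and <|
    (tendsto_log_atTop.eventually_ge_atTop 4).and (eventually_ge_atTop 1)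
  refine ⟨T, C * 2 ^ (3 / 2 : ℝ), fun s h1 h2 hs => ?_⟩
  obtain ⟨hlog, ht, hs1⟩ := hT _ hs
  calc ‖iteratedDeriv k psiLaplace s‖
      ≤ k.factorial * 488 * ((2 * log |s.im|) ^ 9 / δ) ^ (k + 1) / |s.im| ^ 2 :=
        norm_iteratedDeriv_psiLaplace_le (by positivity) (by rw [hδ]; norm_num) k ht h1 h2
    _ = C * log |s.im| ^ n / |s.im| ^ 2 := by
        rw [mul_pow 2, mul_div_right_comm (2 ^ 9), mul_pow _ _ (k + 1), ← pow_mul, ← mul_assoc]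
    _ ≤ C * |s.im| ^ (1 / 2 : ℝ) / |s.im| ^ 2 := by gcongr
    _ = C * |s.im| ^ (-(3 / 2 : ℝ)) := by
        rw [mul_div_assoc, ← rpow_natCast, ← rpow_sub (by positivity)]
        norm_num
    _ ≤ C * ((1 + |s.im|) / 2) ^ (-(3 / 2 : ℝ)) := by
        gcongr ?_ * ?_
        exact rpow_le_rpow_of_nonpos (by positivity) (by linarith) (by norm_num)
    _ = C * 2 ^ (3 / 2 : ℝ) * (1 + |s.im|) ^ (-(3 / 2 : ℝ)) := by
        rw [div_rpow (by positivity) two_pos.le, rpow_neg two_pos.le, div_inv_eq_mul]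
        ring

theorem exists_norm_iteratedDeriv_psiLaplace_le (k : ℕ) : ∃ C, ∀ s : ℂ, 1 ≤ s.re → s.re ≤ 3 / 2 →
    ‖iteratedDeriv k psiLaplace s‖ ≤ C * (1 + |s.im|) ^ (-(3 / 2 : ℝ)) := by
  obtain ⟨T, C, hC⟩ := exists_norm_iteratedDeriv_psiLaplace_le_of_abs_im_ge k
  have hcont : ContinuousOn (fun s => iteratedDeriv k psiLaplace s *
      ((1 + |s.im|) ^ (3 / 2 : ℝ) : ℝ)) (Set.Icc 1 (3 / 2) ×ℂ Set.Icc (-T) T) := by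
    refine ((continuousOn_iteratedDeriv_psiLaplace k).mono fun s hs => hs.1.1).mul ?_
    refine (Complex.continuous_ofReal.comp (Continuous.rpow_const ?_ ?_)).continuousOn
    · fun_prop
    · exact fun s => Or.inr (by norm_num)
  obtain ⟨D, hD⟩ := (isCompact_Icc.reProdIm isCompact_Icc).exists_bound_of_continuousOn hcont
  refine ⟨max C D, fun s h1 h2 => ?_⟩
  rcases le_total T |s.im| with hs | hs
  · exact (hC s h1 h2 hs).trans (by gcongr; exact le_max_left C D)
  · have hbound := hD s ⟨⟨h1, h2⟩, abs_le.mp hs⟩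
    rw [norm_mul, Complex.norm_of_nonneg (by positivity), ← le_div_iff₀ (by positivity),
      div_eq_mul_inv, ← rpow_neg (by positivity)] at hbound
    exact hbound.trans (by gcongr; exact le_max_right C D)

/-! ### Decay of a function from its Laplace transform -/

lemma pow_mul_norm_le_integral_norm_iteratedDeriv_fourier {E : Type*} [NormedAddCommGroup E]
    [NormedSpace ℂ E] [CompleteSpace E] {f : ℝ → E} {k : ℕ} (hc : Continuous f)
    (hf : ∀ n : ℕ, n ≤ k → Integrable fun x : ℝ => x ^ n • f x)
    (hk : Integrable (iteratedDeriv k (𝓕 f))) (y : ℝ) :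
    (2 * π * |y|) ^ k * ‖f y‖ ≤ ∫ ξ, ‖iteratedDeriv k (𝓕 f) ξ‖ := by
  have hderiv :=
    Real.iteratedDeriv_fourier (N := k) (fun n hn => hf n (by exact_mod_cast hn)) le_rfl
  set h : ℝ → E := fun x => (-2 * π * Complex.I * x) ^ k • f x with hh
  have hint : Integrable h := by
    refine ((hf k le_rfl).smul ((-2 * π * Complex.I) ^ k)).congr (.of_forall fun x => ?_)
    simp only [hh, Pi.smul_apply, mul_pow, mul_smul, ← Complex.coe_smul, Complex.ofReal_pow]
  have hinv : 𝓕⁻ (iteratedDeriv k (𝓕 f)) = h := by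
    rw [hderiv] at hk ⊢
    exact (by fun_prop : Continuous h).fourierInv_fourier_eq hint hk
  calc (2 * π * |y|) ^ k * ‖f y‖ = ‖h y‖ := by
        simp [hh, norm_smul, abs_of_pos pi_pos]
    _ ≤ ∫ ξ, ‖iteratedDeriv k (𝓕 f) ξ‖ := by
        rw [← hinv, Real.fourierInv_eq_fourier_neg]
        exact VectorFourier.norm_fourierIntegral_le_integral_norm _ _ _ _ _

lemma iteratedDeriv_comp_add_mul_ofReal {F : ℂ → ℂ} {a c : ℂ}
    (hF : ∀ t : ℝ, AnalyticAt ℂ F (a + c * t)) (k : ℕ) :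
    iteratedDeriv k (fun t : ℝ => F (a + c * t)) =
      fun t : ℝ => c ^ k * iteratedDeriv k F (a + c * t) := by
  induction k with
  | zero => simp
  | succ k ih =>
    funext t
    have hline : HasDerivAt (fun t : ℝ => a + c * t) c t := by
      simpa using ((Complex.ofRealCLM.hasDerivAt (x := t)).const_mul c).const_add a
    have hderiv : HasDerivAt (iteratedDeriv k F) (iteratedDeriv (k + 1) F (a + c * t))
        (a + c * t) := by
      rw [iteratedDeriv_succ, iteratedDeriv_eq_iterate]
      exact ((hF t).iterated_deriv k).differentiableAt.hasDerivAt
    have hcomp : HasDerivAt (fun t : ℝ => iteratedDeriv k F (a + c * t))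
        (c * iteratedDeriv (k + 1) F (a + c * t)) t :=
      HasDerivAt.scomp (h := fun t : ℝ => a + c * t) t hderiv hline
    rw [iteratedDeriv_succ, ih, (hcomp.const_mul (c ^ k)).deriv]
    ring

section LaplaceDecay

variable {R : ℝ → ℂ} {M : ℝ}

lemma integrable_pow_smul_mul_cexp (hR : Continuous R) (hsupp : ∀ y ≤ 0, R y = 0)
    (hM : ∀ y, ‖R y‖ ≤ M * exp y) {s : ℂ} (hs : 1 < s.re) (n : ℕ) :
    Integrable fun y : ℝ => y ^ n • (R y * Complex.exp (-s * y)) := by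
  have hIoi : IntegrableOn (fun y : ℝ => y ^ n • (R y * Complex.exp (-s * y))) (Set.Ioi 0) := by
    have hgamma := (integrableOn_rpow_mul_exp_neg_mul_rpow (s := n) (p := 1) (b := s.re - 1)
      (by linarith [n.cast_nonneg (α := ℝ)]) one_pos (by linarith)).const_mul M
    refine Integrable.mono' hgamma (by fun_prop : Continuous _).aestronglyMeasurable ?_
    refine (ae_restrict_iff' measurableSet_Ioi).mpr (.of_forall fun y hy => ?_)
    have hy0 : 0 < y := hy
    calc ‖y ^ n • (R y * Complex.exp (-s * y))‖ = y ^ n * (‖R y‖ * exp (-s.re * y)) := by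
          simp [Complex.norm_exp, abs_of_pos hy0]
      _ ≤ y ^ n * (M * exp y * exp (-s.re * y)) := by gcongr; exact hM y
      _ = M * (y ^ (n : ℝ) * exp (-(s.re - 1) * y ^ (1 : ℝ))) := by
          rw [rpow_natCast, rpow_one, mul_assoc M, ← exp_add]
          ring_nf
  rw [← integrableOn_univ]
  refine hIoi.of_forall_sdiff_eq_zero MeasurableSet.univ fun y hy => ?_
  simp [hsupp y (not_lt.mp hy.2)]

lemma fourier_mul_exp_eq {F : ℂ → ℂ}
    (hF : ∀ s : ℂ, 1 < s.re → ∫ y : ℝ, R y * Complex.exp (-s * y) = F s) {σ : ℝ} (hσ : 1 < σ) :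
    𝓕 (fun y : ℝ => R y * Complex.exp (-σ * y)) =
      fun ξ : ℝ => F (σ + 2 * π * Complex.I * ξ) := by
  funext ξ
  rw [Real.fourier_real_eq_integral_exp_smul, ← hF _ (by simpa using hσ)]
  refine integral_congr_ae (.of_forall fun y => ?_)
  simp only [smul_eq_mul]
  rw [mul_left_comm, ← Complex.exp_add]
  push_cast
  ring_nf

lemma iteratedDeriv_fourier_mul_exp_eq {F : ℂ → ℂ}
    (hFan : ∀ s : ℂ, 1 < s.re → AnalyticAt ℂ F s)
    (hF : ∀ s : ℂ, 1 < s.re → ∫ y : ℝ, R y * Complex.exp (-s * y) = F s) {σ : ℝ} (hσ : 1 < σ)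
    (k : ℕ) :
    iteratedDeriv k (𝓕 fun y : ℝ => R y * Complex.exp (-σ * y)) = fun ξ : ℝ =>
      (2 * π * Complex.I) ^ k * iteratedDeriv k F (σ + 2 * π * Complex.I * ξ) := by
  rw [fourier_mul_exp_eq hF hσ]
  exact iteratedDeriv_comp_add_mul_ofReal (fun ξ => hFan _ (by simpa using hσ)) k

lemma pow_mul_norm_mul_exp_le_of_laplace (hR : Continuous R) (hsupp : ∀ y ≤ 0, R y = 0)
    (hM : ∀ y, ‖R y‖ ≤ M * exp y) {F : ℂ → ℂ} (hFan : ∀ s : ℂ, 1 < s.re → AnalyticAt ℂ F s)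
    (hF : ∀ s : ℂ, 1 < s.re → ∫ y : ℝ, R y * Complex.exp (-s * y) = F s) {k : ℕ} {g : ℝ → ℝ}
    (hg : Integrable g) {σ : ℝ} (hσ : 1 < σ)
    (hFg : ∀ t : ℝ, ‖iteratedDeriv k F (σ + t * Complex.I)‖ ≤ g t) (y : ℝ) :
    |y| ^ k * (‖R y‖ * exp (-σ * y)) ≤ (2 * π)⁻¹ * ∫ t, g t := by
  set f : ℝ → ℂ := fun y => R y * Complex.exp (-σ * y) with hf
  have hfourier := iteratedDeriv_fourier_mul_exp_eq hFan hF hσ k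
  have hbound (ξ : ℝ) : ‖iteratedDeriv k (𝓕 f) ξ‖ ≤ (2 * π) ^ k * g (2 * π * ξ) := by
    have harg : (σ + 2 * π * Complex.I * ξ : ℂ) = σ + (2 * π * ξ : ℝ) * Complex.I := by
      push_cast
      ring
    have hnorm : ‖(2 * π * Complex.I : ℂ)‖ = 2 * π := by simp [abs_of_pos pi_pos]
    rw [hfourier, norm_mul, norm_pow, hnorm, harg]
    gcongr
    exact hFg _
  have hdom : Integrable fun ξ : ℝ => (2 * π) ^ k * g (2 * π * ξ) :=
    (hg.comp_mul_left' two_pi_pos.ne').const_mul _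
  have hcont : Continuous (iteratedDeriv k (𝓕 f)) := by
    rw [hfourier, iteratedDeriv_eq_iterate]
    refine continuous_const.mul (continuous_iff_continuousAt.mpr fun ξ => ?_)
    exact ContinuousAt.comp (f := fun ξ : ℝ => (σ + 2 * π * Complex.I * ξ : ℂ))
      ((hFan _ (by simpa using hσ)).iterated_deriv k).continuousAt (by fun_prop)
  have hdecay := pow_mul_norm_le_integral_norm_iteratedDeriv_fourier (f := f) (k := k)
    (by fun_prop) (fun n _ => integrable_pow_smul_mul_cexp hR hsupp hM (by simpa using hσ) n)
    (hdom.mono' hcont.aestronglyMeasurable (.of_forall hbound)) y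
  have hfy : ‖f y‖ = ‖R y‖ * exp (-σ * y) := by simp [hf, Complex.norm_exp]
  rw [mul_pow, hfy, mul_assoc] at hdecay
  refine le_of_mul_le_mul_left ?_ (pow_pos two_pi_pos k)
  calc (2 * π) ^ k * (|y| ^ k * (‖R y‖ * exp (-σ * y)))
      ≤ ∫ ξ, ‖iteratedDeriv k (𝓕 f) ξ‖ := hdecay
    _ ≤ ∫ ξ, (2 * π) ^ k * g (2 * π * ξ) :=
        integral_mono_of_nonneg (.of_forall fun _ => norm_nonneg _) hdom (.of_forall hbound)
    _ = (2 * π) ^ k * ((2 * π)⁻¹ * ∫ t, g t) := by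
        rw [integral_const_mul, Measure.integral_comp_mul_left, smul_eq_mul,
          abs_of_pos (by positivity)]

theorem pow_mul_norm_le_of_laplace (hR : Continuous R) (hsupp : ∀ y ≤ 0, R y = 0)
    (hM : ∀ y, ‖R y‖ ≤ M * exp y) {F : ℂ → ℂ} (hFan : ∀ s : ℂ, 1 < s.re → AnalyticAt ℂ F s)
    (hF : ∀ s : ℂ, 1 < s.re → ∫ y : ℝ, R y * Complex.exp (-s * y) = F s) {k : ℕ} {g : ℝ → ℝ}
    (hg : Integrable g)
    (hFg : ∀ᶠ σ : ℝ in 𝓝[>] 1, ∀ t : ℝ, ‖iteratedDeriv k F (σ + t * Complex.I)‖ ≤ g t) (y : ℝ) :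
    |y| ^ k * ‖R y‖ ≤ (2 * π)⁻¹ * (∫ t, g t) * exp y := by
  have hlim : Tendsto (fun σ : ℝ => |y| ^ k * (‖R y‖ * exp (-σ * y))) (𝓝[>] 1)
      (𝓝 (|y| ^ k * (‖R y‖ * exp (-1 * y)))) :=
    (Continuous.tendsto (by fun_prop) 1).mono_left nhdsWithin_le_nhds
  have hle := le_of_tendsto hlim <| by
    filter_upwards [hFg, self_mem_nhdsWithin] with σ hσ h1
    exact pow_mul_norm_mul_exp_le_of_laplace hR hsupp hM hFan hF hg h1 hσ y
  rwa [neg_one_mul, exp_neg, ← mul_assoc, ← div_eq_mul_inv, div_le_iff₀ (exp_pos y)] at hle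

end LaplaceDecay

/-! ### The error term of the prime number theorem on average -/

lemma integral_Ioi_exp_eq_integral_exp_smul {E : Type*} [NormedAddCommGroup E] [NormedSpace ℝ E]
    (a : ℝ) (g : ℝ → E) :
    ∫ t in Set.Ioi (exp a), g t = ∫ u in Set.Ioi a, exp u • g (exp u) := by
  rw [← image_exp_Ioi, integral_image_eq_integral_abs_deriv_smul measurableSet_Ioi
    (fun u _ => (hasDerivAt_exp u).hasDerivWithinAt) exp_injective.injOn]
  simp only [abs_exp]

/-- The primitive is the convolution of `r` with the indicator function of `[0, ∞)`. -/
lemma integral_primitive_mul_cexp {r : ℝ → ℂ} {s : ℂ} (hs : 0 < s.re)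
    (hr : IntegrableOn (fun u : ℝ => r u * Complex.exp (-s * u)) (Set.Ioi 0)) :
    ∫ y in Set.Ioi (0 : ℝ), (∫ u in 0..y, r u) * Complex.exp (-s * y) =
      (∫ u in Set.Ioi (0 : ℝ), r u * Complex.exp (-s * u)) / s := by
  have hconv := integral_posConvolution hr
    (integrableOn_exp_mul_complex_Ioi (a := -s) (by simpa using hs) 0) (ContinuousLinearMap.mul ℝ ℂ)
  simp only [ContinuousLinearMap.mul_apply',
    integral_exp_mul_complex_Ioi (a := -s) (by simpa using hs)] at hconv
  rw [div_eq_mul_one_div, ← neg_div_neg_eq 1 s]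
  convert hconv using 1
  · refine setIntegral_congr_fun measurableSet_Ioi fun y _ => ?_
    simp only [← intervalIntegral.integral_mul_const]
    refine intervalIntegral.integral_congr fun u _ => ?_
    simp only [mul_assoc, ← Complex.exp_add]
    push_cast
    ring_nf
  · simp

/-- The error term of the prime number theorem in the logarithmic variable, `ψ(e^u) - e^u`. -/
noncomputable def psiError (u : ℝ) : ℝ := Chebyshev.psi (exp u) - exp u

lemma abs_psiError_le (u : ℝ) : |psiError u| ≤ (log 4 + 4) * exp u := by
  have hpsi := Chebyshev.psi_le_const_mul_self (exp_nonneg u)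
  have hlog : 0 ≤ log 4 := log_nonneg (by norm_num)
  rw [psiError, abs_le]
  constructor <;> nlinarith [Chebyshev.psi_nonneg (exp u), exp_pos u]

lemma measurable_psiError : Measurable psiError :=
  (Chebyshev.psi_mono.measurable.comp measurable_exp).sub measurable_exp

lemma intervalIntegrable_psiError (a b : ℝ) : IntervalIntegrable psiError volume a b :=
  ((Chebyshev.psi_mono.comp exp_monotone).intervalIntegrable).sub
    (continuous_exp.intervalIntegrable a b)

lemma psi_eq_sum_Icc_one (x : ℝ) :
    Chebyshev.psi x = ∑ n ∈ Finset.Icc 1 ⌊x⌋₊, ArithmeticFunction.vonMangoldt n := rfl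

lemma integral_psi_exp_mul_cexp {s : ℂ} (hs : 1 < s.re) :
    ∫ u in Set.Ioi (0 : ℝ), (Chebyshev.psi (exp u) : ℂ) * Complex.exp (-s * u) =
      -logDeriv riemannZeta s / s := by
  have hO : (fun n : ℕ => ∑ k ∈ Finset.Icc 1 n, ArithmeticFunction.vonMangoldt k)
      =O[atTop] fun n => (n : ℝ) ^ (1 : ℝ) := by
    refine IsBigO.of_bound (log 4 + 4) (.of_forall fun n => ?_)
    have hpsi := Chebyshev.psi_le_const_mul_self (n.cast_nonneg (α := ℝ))
    rw [psi_eq_sum_Icc_one, Nat.floor_natCast] at hpsi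
    rwa [norm_of_nonneg (Finset.sum_nonneg fun _ _ => ArithmeticFunction.vonMangoldt_nonneg),
      rpow_one, norm_of_nonneg n.cast_nonneg]
  have hL := LSeries_eq_mul_integral_of_nonneg (fun n => ArithmeticFunction.vonMangoldt n)
    zero_le_one hs hO fun _ => ArithmeticFunction.vonMangoldt_nonneg
  rw [ArithmeticFunction.LSeries_vonMangoldt_eq_deriv_riemannZeta_div hs, ← exp_zero,
    integral_Ioi_exp_eq_integral_exp_smul] at hL
  have hs0 : s ≠ 0 := Complex.ne_zero_of_one_lt_re hs
  rw [logDeriv_apply, ← neg_div, hL, mul_div_cancel_left₀ _ hs0]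
  refine setIntegral_congr_fun measurableSet_Ioi fun u _ => ?_
  have hcpow : (exp u : ℂ) ^ (-(s + 1)) = Complex.exp (-(s + 1) * u) := by
    rw [Complex.cpow_def_of_ne_zero (by exact_mod_cast (exp_pos u).ne'),
      ← Complex.ofReal_log (exp_nonneg u), log_exp, mul_comm]
  simp only [hcpow, psi_eq_sum_Icc_one, Complex.ofReal_sum, Complex.real_smul]
  rw [mul_left_comm, Complex.ofReal_exp, ← Complex.exp_add]
  ring_nf

lemma integrableOn_psiError_mul_cexp {s : ℂ} (hs : 1 < s.re) :
    IntegrableOn (fun u : ℝ => (psiError u : ℂ) * Complex.exp (-s * u)) (Set.Ioi 0) := by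
  have hdom := (integrableOn_exp_mul_Ioi (a := 1 - s.re) (by linarith) 0).const_mul (log 4 + 4)
  refine hdom.mono' ?_ (.of_forall fun u => ?_)
  · exact ((Complex.measurable_ofReal.comp measurable_psiError).mul
      (by fun_prop)).aestronglyMeasurable
  · rw [norm_mul, Complex.norm_real, Complex.norm_exp]
    calc |psiError u| * exp (-s * u).re ≤ (log 4 + 4) * exp u * exp (-s.re * u) := by
          simp only [Complex.mul_re, Complex.neg_re, Complex.ofReal_re, Complex.ofReal_im, mul_zero,
            sub_zero]
          gcongr
          exact abs_psiError_le u
      _ = (log 4 + 4) * exp ((1 - s.re) * u) := by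
          rw [mul_assoc, ← exp_add]
          ring_nf

lemma integral_psiError_mul_cexp {s : ℂ} (hs : 1 < s.re) :
    ∫ u in Set.Ioi (0 : ℝ), (psiError u : ℂ) * Complex.exp (-s * u) = s * psiLaplace s := by
  have hs0 : s ≠ 0 := Complex.ne_zero_of_one_lt_re hs
  have hs1 : s ≠ 1 := by rintro rfl; simp at hs
  have hre : (1 - s).re < 0 := by simpa using hs
  have hexp : ∫ u in Set.Ioi (0 : ℝ), Complex.exp ((1 - s) * u) = (s - 1)⁻¹ := by
    rw [integral_exp_mul_complex_Ioi hre, Complex.ofReal_zero, mul_zero, Complex.exp_zero,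
      ← neg_sub s 1, neg_div_neg_eq, one_div]
  have hsum (u : ℝ) : (Chebyshev.psi (exp u) : ℂ) * Complex.exp (-s * u) =
      psiError u * Complex.exp (-s * u) + Complex.exp ((1 - s) * u) := by
    rw [sub_mul, Complex.exp_sub, one_mul, neg_mul, Complex.exp_neg, psiError]
    push_cast
    ring
  have hpsi := integral_psi_exp_mul_cexp hs
  simp only [hsum] at hpsi
  rw [integral_add (integrableOn_psiError_mul_cexp hs) (integrableOn_exp_mul_complex_Ioi hre 0),
    hexp] at hpsi
  rw [eq_sub_of_add_eq hpsi, psiLaplace,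
    logDeriv_riemannZeta₁ hs1 (riemannZeta_ne_zero_of_one_lt_re hs)]
  field_simp [sub_ne_zero.mpr hs1]
  ring

/-- `∫_0^{y⁺} (ψ(e^u) - e^u) du`, extended by zero to the left of the origin. -/
noncomputable def psiErrorPrimitive (y : ℝ) : ℝ := ∫ u in 0..max y 0, psiError u

lemma continuous_psiErrorPrimitive : Continuous psiErrorPrimitive :=
  (intervalIntegral.continuous_primitive intervalIntegrable_psiError 0).comp
    (continuous_id.max continuous_const)

lemma psiErrorPrimitive_of_nonpos {y : ℝ} (hy : y ≤ 0) : psiErrorPrimitive y = 0 := by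
  rw [psiErrorPrimitive, max_eq_right hy, intervalIntegral.integral_same]

lemma psiErrorPrimitive_of_nonneg {y : ℝ} (hy : 0 ≤ y) :
    psiErrorPrimitive y = ∫ u in 0..y, psiError u := by
  rw [psiErrorPrimitive, max_eq_left hy]

lemma abs_psiErrorPrimitive_le (y : ℝ) : |psiErrorPrimitive y| ≤ (log 4 + 4) * exp y := by
  rcases le_total y 0 with hy | hy
  · rw [psiErrorPrimitive_of_nonpos hy, abs_zero]
    positivity
  · calc |psiErrorPrimitive y| ≤ ∫ u in 0..y, (log 4 + 4) * exp u := by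
          rw [psiErrorPrimitive_of_nonneg hy]
          exact intervalIntegral.norm_integral_le_of_norm_le (f := psiError) hy
            (.of_forall fun u _ => abs_psiError_le u)
            ((by fun_prop : Continuous fun u => (log 4 + 4) * exp u).intervalIntegrable 0 y)
      _ = (log 4 + 4) * (exp y - 1) := by
          rw [intervalIntegral.integral_const_mul, integral_exp, exp_zero]
      _ ≤ (log 4 + 4) * exp y := by gcongr; linarith

lemma integral_psiErrorPrimitive_mul_cexp {s : ℂ} (hs : 1 < s.re) :
    ∫ y : ℝ, (psiErrorPrimitive y : ℂ) * Complex.exp (-s * y) = psiLaplace s := by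
  have hs0 : s ≠ 0 := Complex.ne_zero_of_one_lt_re hs
  rw [← mul_div_cancel_left₀ (psiLaplace s) hs0, ← integral_psiError_mul_cexp hs,
    ← integral_primitive_mul_cexp (by linarith) (integrableOn_psiError_mul_cexp hs),
    ← setIntegral_eq_integral_of_forall_compl_eq_zero (s := Set.Ioi 0)]
  · refine setIntegral_congr_fun measurableSet_Ioi fun y hy => ?_
    simp only [psiErrorPrimitive_of_nonneg (le_of_lt hy), intervalIntegral.integral_ofReal]
  · intro y hy
    simp [psiErrorPrimitive_of_nonpos (not_lt.mp hy)]

theorem exists_pow_mul_abs_integral_psiError_le (k : ℕ) :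
    ∃ C, ∀ y, 0 ≤ y → y ^ k * |∫ u in 0..y, psiError u| ≤ C * exp y := by
  obtain ⟨C, hC⟩ := exists_norm_iteratedDeriv_psiLaplace_le k
  have hg : Integrable fun t : ℝ => C * (1 + |t|) ^ (-(3 / 2 : ℝ)) :=
    (integrable_one_add_norm (by norm_num)).const_mul C
  refine ⟨(2 * π)⁻¹ * ∫ t : ℝ, C * (1 + |t|) ^ (-(3 / 2 : ℝ)), fun y hy => ?_⟩
  have hdecay := pow_mul_norm_le_of_laplace (R := fun y => (psiErrorPrimitive y : ℂ)) (k := k)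
    (by exact Complex.continuous_ofReal.comp continuous_psiErrorPrimitive)
    (fun y hy => by simp [psiErrorPrimitive_of_nonpos hy])
    (fun y => by simpa using abs_psiErrorPrimitive_le y)
    (fun s hs => analyticAt_psiLaplace_of_one_le_re hs.le)
    (fun s hs => integral_psiErrorPrimitive_mul_cexp hs) hg
    (by
      filter_upwards [Ioo_mem_nhdsGT (show (1 : ℝ) < 3 / 2 by norm_num)] with σ hσ t
      simpa using hC (σ + t * Complex.I) (by simpa using hσ.1.le) (by simpa using hσ.2.le)) y
  rwa [abs_of_nonneg hy, Complex.norm_real, psiErrorPrimitive_of_nonneg hy] at hdecay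

/-! ### A Tauberian argument and the prime number theorem -/

section Tauberian

variable {r : ℝ → ℝ}

lemma mul_le_integral_add_of_sub_le (hr : ∀ a b, IntervalIntegrable r volume a b)
    (hmono : ∀ a b, a ≤ b → r a - (b - a) * exp b ≤ r b) {y h : ℝ} (hh : 0 ≤ h) :
    h * r y ≤ (∫ u in y..y + h, r u) + h ^ 2 * exp (y + h) := by
  have hle : ∫ _ in y..y + h, (r y - h * exp (y + h)) ≤ ∫ u in y..y + h, r u := by
    refine intervalIntegral.integral_mono_on (by linarith) (by simp) (hr _ _) fun u hu => ?_
    refine le_trans ?_ (hmono y u hu.1)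
    gcongr <;> linarith [hu.1, hu.2]
  rw [intervalIntegral.integral_const, add_sub_cancel_left, smul_eq_mul] at hle
  linarith

lemma integral_le_mul_add_of_sub_le (hr : ∀ a b, IntervalIntegrable r volume a b)
    (hmono : ∀ a b, a ≤ b → r a - (b - a) * exp b ≤ r b) {y h : ℝ} (hh : 0 ≤ h) :
    ∫ u in y - h..y, r u ≤ h * r y + h ^ 2 * exp y := by
  have hle : ∫ u in y - h..y, r u ≤ ∫ _ in y - h..y, (r y + h * exp y) := by
    refine intervalIntegral.integral_mono_on (by linarith) (hr _ _) (by simp) fun u hu => ?_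
    have hgap : (y - u) * exp y ≤ h * exp y := by gcongr; linarith [hu.1]
    linarith [hmono u y hu.2]
  rw [intervalIntegral.integral_const, sub_sub_cancel, smul_eq_mul] at hle
  linarith

lemma mul_abs_le_of_abs_integral_le (hr : ∀ a b, IntervalIntegrable r volume a b)
    (hmono : ∀ a b, a ≤ b → r a - (b - a) * exp b ≤ r b) {y h D : ℝ} (hh : 0 ≤ h)
    (hD : ∀ z ∈ Set.Icc (y - h) (y + h), |∫ u in 0..z, r u| ≤ D) :
    h * |r y| ≤ 2 * D + h ^ 2 * exp (y + h) := by
  have hupper := mul_le_integral_add_of_sub_le hr hmono (y := y) hh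
  have hlower := integral_le_mul_add_of_sub_le hr hmono (y := y) hh
  have hexp : h ^ 2 * exp y ≤ h ^ 2 * exp (y + h) := by gcongr; linarith
  rw [← intervalIntegral.integral_interval_sub_left (hr 0 _) (hr 0 _)] at hupper hlower
  have hleft := abs_le.mp (hD (y - h) ⟨le_rfl, by linarith⟩)
  have hmid := abs_le.mp (hD y ⟨by linarith, by linarith⟩)
  have hright := abs_le.mp (hD (y + h) ⟨by linarith, le_rfl⟩)
  rw [← abs_of_nonneg hh, ← abs_mul, abs_of_nonneg hh, abs_le]
  constructor <;> linarith

/-- Compare `r y` with its average over intervals of length `y ^ (-A)` on either side of `y`. -/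
theorem isBigO_exp_div_pow_of_integral_isBigO (hr : ∀ a b, IntervalIntegrable r volume a b)
    (hmono : ∀ a b, a ≤ b → r a - (b - a) * exp b ≤ r b) {A : ℕ}
    (hR : (fun y => ∫ u in 0..y, r u) =O[atTop] fun y => exp y / y ^ (2 * A)) :
    r =O[atTop] fun y => exp y / y ^ A := by
  obtain ⟨C, hC0, hC⟩ := hR.exists_nonneg
  obtain ⟨Y, hY⟩ := eventually_atTop.mp hC.bound
  refine IsBigO.of_bound (2 * C * exp 1 * 2 ^ (2 * A) + exp 1) ?_
  filter_upwards [eventually_ge_atTop 2, eventually_ge_atTop (Y + 1)] with y hy2 hyY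
  have hpow : 1 ≤ y ^ A := one_le_pow₀ (by linarith)
  set h : ℝ := 1 / y ^ A with hh
  have hh0 : 0 < h := by positivity
  have hh1 : h ≤ 1 := (div_le_one (by positivity)).mpr hpow
  have hD (z : ℝ) (hz : z ∈ Set.Icc (y - h) (y + h)) :
      |∫ u in 0..z, r u| ≤ C * (exp (y + 1) / (y / 2) ^ (2 * A)) := by
    have hz0 : 0 < z := by linarith [hz.1]
    refine (hY z (by linarith [hz.1])).trans ?_
    rw [norm_of_nonneg (by positivity)]
    gcongr <;> linarith [hz.1, hz.2]
  refine le_of_mul_le_mul_left ?_ hh0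
  calc h * ‖r y‖ ≤ 2 * (C * (exp (y + 1) / (y / 2) ^ (2 * A))) + h ^ 2 * exp (y + h) :=
        mul_abs_le_of_abs_integral_le hr hmono hh0.le hD
    _ ≤ 2 * (C * (exp (y + 1) / (y / 2) ^ (2 * A))) + h ^ 2 * exp (y + 1) := by gcongr
    _ = h * ((2 * C * exp 1 * 2 ^ (2 * A) + exp 1) * ‖exp y / y ^ A‖) := by
        rw [norm_of_nonneg (by positivity), exp_add, div_pow, pow_mul' y, hh]
        field_simp

end Tauberian

lemma psiError_sub_le {a b : ℝ} (hab : a ≤ b) :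
    psiError a - (b - a) * exp b ≤ psiError b := by
  have hpsi := Chebyshev.psi_mono (exp_le_exp.mpr hab)
  have hexp : exp b - exp a ≤ (b - a) * exp b := by
    have := mul_le_mul_of_nonneg_left (add_one_le_exp (a - b)) (exp_nonneg b)
    rw [← exp_add, add_sub_cancel] at this
    linarith
  simp only [psiError]
  linarith

lemma psiError_isBigO (A : ℕ) : psiError =O[atTop] fun y => exp y / y ^ A := by
  refine isBigO_exp_div_pow_of_integral_isBigO intervalIntegrable_psiError
    (fun a b => psiError_sub_le) ?_
  obtain ⟨C, hC⟩ := exists_pow_mul_abs_integral_psiError_le (2 * A)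
  refine IsBigO.of_bound C ?_
  filter_upwards [eventually_gt_atTop 0] with y hy
  rw [norm_of_nonneg (by positivity : 0 ≤ exp y / y ^ (2 * A)), mul_div_assoc',
    le_div_iff₀' (by positivity)]
  exact hC y hy.le

theorem psi_sub_id_isBigO (A : ℕ) :
    (fun x => Chebyshev.psi x - x) =O[atTop] fun x => x / log x ^ A := by
  refine ((psiError_isBigO A).comp_tendsto tendsto_log_atTop).congr' ?_ ?_ <;>
    filter_upwards [eventually_gt_atTop 0] with x hx <;>
    simp [psiError, exp_log hx]

lemma rpow_isBigO_div_log_pow {r : ℝ} (hr : r < 1) (A : ℕ) :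
    (fun x : ℝ => x ^ r) =O[atTop] fun x => x / log x ^ A := by
  have hlog : (fun x => log x ^ A) =O[atTop] fun x : ℝ => x ^ (1 - r) := by
    simpa only [rpow_natCast] using (isLittleO_log_rpow_rpow_atTop A (sub_pos.mpr hr)).isBigO
  have hprod := (isBigO_refl (fun x : ℝ => x ^ r / log x ^ A) atTop).mul hlog
  refine hprod.congr' ?_ ?_ <;> filter_upwards [eventually_gt_atTop 1] with x hx
  · rw [div_mul_cancel₀ _ (pow_pos (log_pos hx) A).ne']
  · rw [div_mul_eq_mul_div, ← rpow_add (by linarith), add_sub_cancel, rpow_one]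

theorem theta_sub_id_isBigO (A : ℕ) :
    (fun x => Chebyshev.theta x - x) =O[atTop] fun x => x / log x ^ A := by
  have hdiff : (fun x => Chebyshev.psi x - Chebyshev.theta x) =O[atTop]
      fun x : ℝ => x ^ (1 / 2 : ℝ) := by
    simp only [← sqrt_eq_rpow]
    exact Chebyshev.isBigO_psi_sub_theta_sqrt
  refine ((psi_sub_id_isBigO A).sub
    (hdiff.trans (rpow_isBigO_div_log_pow (by norm_num) A))).congr_left fun x => ?_
  ring

/-! ### Mertens' second theorem with an unspecified constant -/

section AbelSummation

variable {a b : ℝ} {f f' : ℝ → ℝ}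

lemma intervalIntegrable_mul_sum_sub_id (c : ℕ → ℝ) (ha : 0 ≤ a) (hab : a ≤ b)
    (hf' : ContinuousOn f' (Set.Icc a b)) :
    IntervalIntegrable (fun t => f' t * (∑ k ∈ Finset.Icc 0 ⌊t⌋₊, c k - t)) volume a b := by
  rw [intervalIntegrable_iff_integrableOn_Icc_of_le hab]
  simp_rw [mul_sub]
  exact (integrableOn_mul_sum_Icc c ha hf'.integrableOn_Icc).sub
    (hf'.mul continuousOn_id).integrableOn_Icc

lemma sum_mul_eq_integral_add_sub_sub_integral (c : ℕ → ℝ) (ha : 0 ≤ a) (hab : a ≤ b)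
    (hf : ∀ t ∈ Set.Icc a b, HasDerivAt f (f' t) t) (hf' : ContinuousOn f' (Set.Icc a b)) :
    ∑ k ∈ Finset.Ioc ⌊a⌋₊ ⌊b⌋₊, f k * c k =
      (∫ t in a..b, f t) + f b * (∑ k ∈ Finset.Icc 0 ⌊b⌋₊, c k - b)
        - f a * (∑ k ∈ Finset.Icc 0 ⌊a⌋₊, c k - a)
        - ∫ t in a..b, f' t * (∑ k ∈ Finset.Icc 0 ⌊t⌋₊, c k - t) := by
  have hderiv : Set.EqOn (deriv f) f' (Set.Icc a b) := fun t ht => (hf t ht).deriv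
  have habel := sum_mul_eq_sub_sub_integral_mul c ha hab (fun t ht => (hf t ht).differentiableAt)
    (hf'.integrableOn_Icc.congr_fun hderiv.symm measurableSet_Icc)
  rw [setIntegral_congr_fun measurableSet_Ioc (g := fun t => f' t * ∑ k ∈ Finset.Icc 0 ⌊t⌋₊, c k)
    fun t ht => by simp only [hderiv (Set.Ioc_subset_Icc_self ht)],
    ← intervalIntegral.integral_of_le hab] at habel
  have hparts : ∫ t in a..b, f t * 1 = f b * b - f a * a - ∫ t in a..b, f' t * t := by
    rw [← Set.uIcc_of_le hab] at hf hf'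
    exact intervalIntegral.integral_mul_deriv_eq_deriv_mul hf (fun t _ => hasDerivAt_id t)
      hf'.intervalIntegrable (by simp)
  have hsplit : ∫ t in a..b, f' t * ∑ k ∈ Finset.Icc 0 ⌊t⌋₊, c k =
      (∫ t in a..b, f' t * (∑ k ∈ Finset.Icc 0 ⌊t⌋₊, c k - t)) + ∫ t in a..b, f' t * t := by
    rw [← intervalIntegral.integral_add (intervalIntegrable_mul_sum_sub_id c ha hab hf')]
    · simp_rw [← mul_add, sub_add_cancel]
    · exact ((hf'.mul continuousOn_id).intervalIntegrable_of_Icc hab)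
  simp only [mul_one] at hparts
  rw [habel, hsplit, hparts]
  ring

lemma abs_sum_mul_sub_integral_le {c : ℕ → ℝ} {G : ℝ → ℝ} (ha : 0 ≤ a) (hab : a ≤ b)
    (hf : ∀ t ∈ Set.Icc a b, HasDerivAt f (f' t) t) (hf' : ContinuousOn f' (Set.Icc a b))
    (hG : ContinuousOn G (Set.Icc a b)) (hf_nonneg : ∀ t ∈ Set.Icc a b, 0 ≤ f t)
    (hf'_nonpos : ∀ t ∈ Set.Icc a b, f' t ≤ 0)
    (hc : ∀ t ∈ Set.Icc a b, |∑ k ∈ Finset.Icc 0 ⌊t⌋₊, c k - t| ≤ G t) :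
    |∑ k ∈ Finset.Ioc ⌊a⌋₊ ⌊b⌋₊, f k * c k - ∫ t in a..b, f t| ≤
      f b * G b + f a * G a + ∫ t in a..b, -f' t * G t := by
  have hboundary (t : ℝ) (ht : t ∈ Set.Icc a b) :
      |f t * (∑ k ∈ Finset.Icc 0 ⌊t⌋₊, c k - t)| ≤ f t * G t := by
    rw [abs_mul, abs_of_nonneg (hf_nonneg t ht)]
    exact mul_le_mul_of_nonneg_left (hc t ht) (hf_nonneg t ht)
  have hinterior : |∫ t in a..b, f' t * (∑ k ∈ Finset.Icc 0 ⌊t⌋₊, c k - t)| ≤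
      ∫ t in a..b, -f' t * G t := by
    refine (intervalIntegral.abs_integral_le_integral_abs hab).trans
      (intervalIntegral.integral_mono_on hab (intervalIntegrable_mul_sum_sub_id c ha hab hf').abs
        ((hf'.neg.mul hG).intervalIntegrable_of_Icc hab) fun t ht => ?_)
    rw [abs_mul, abs_of_nonpos (hf'_nonpos t ht)]
    exact mul_le_mul_of_nonneg_left (hc t ht) (neg_nonneg.mpr (hf'_nonpos t ht))
  have hleft := abs_le.mp (hboundary a (Set.left_mem_Icc.mpr hab))
  have hright := abs_le.mp (hboundary b (Set.right_mem_Icc.mpr hab))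
  rw [abs_le] at hinterior
  rw [sum_mul_eq_integral_add_sub_sub_integral c ha hab hf hf', abs_le]
  constructor <;> linarith [hinterior.1, hinterior.2]

lemma abs_sum_primes_mul_log_sub_integral_le {G : ℝ → ℝ} (ha : 0 ≤ a) (hab : a ≤ b)
    (hf : ∀ t ∈ Set.Icc a b, HasDerivAt f (f' t) t) (hf' : ContinuousOn f' (Set.Icc a b))
    (hG : ContinuousOn G (Set.Icc a b)) (hf_nonneg : ∀ t ∈ Set.Icc a b, 0 ≤ f t)
    (hf'_nonpos : ∀ t ∈ Set.Icc a b, f' t ≤ 0)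
    (hθ : ∀ t ∈ Set.Icc a b, |Chebyshev.theta t - t| ≤ G t) :
    |∑ p ∈ Finset.Ioc ⌊a⌋₊ ⌊b⌋₊ with p.Prime, f p * log p - ∫ t in a..b, f t| ≤
      f b * G b + f a * G a + ∫ t in a..b, -f' t * G t := by
  simp_rw [Chebyshev.theta_eq_sum_Icc, Finset.sum_filter] at hθ
  simpa only [Finset.sum_filter, mul_ite, mul_zero] using
    abs_sum_mul_sub_integral_le ha hab hf hf' hG hf_nonneg hf'_nonpos hθ

end AbelSummation

lemma continuousOn_div_log_pow {s : Set ℝ} {g : ℝ → ℝ} (hs : s ⊆ Set.Ioi 1)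
    (hg : ContinuousOn g s) (n : ℕ) : ContinuousOn (fun t => g t / log t ^ n) s :=
  hg.div ((continuousOn_log.mono fun t ht => by grind).pow n)
    fun t ht => (pow_pos (log_pos (hs ht)) n).ne'

lemma abs_card_primes_Ioc_sub_integral_le {a b E : ℝ} (ha : 1 < a) (hab : a ≤ b)
    (hθ : ∀ t ∈ Set.Icc a b, |Chebyshev.theta t - t| ≤ E) :
    |((Finset.Ioc ⌊a⌋₊ ⌊b⌋₊).filter Nat.Prime).card - ∫ t in a..b, (log t)⁻¹| ≤
      2 * (log a)⁻¹ * E := by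
  have hgt : ∀ t ∈ Set.Icc a b, 1 < t := fun t ht => ha.trans_le ht.1
  have hne : ∀ t ∈ Set.Icc a b, t ≠ 0 := fun t ht => (one_pos.trans (hgt t ht)).ne'
  have habel := abs_sum_primes_mul_log_sub_integral_le (by linarith) hab
    (fun t ht => hasDerivAt_inv_log (hne t ht) (hgt t ht).ne' (by linarith [hgt t ht]))
    (continuousOn_div_log_pow hgt (by fun_prop (disch := assumption)) 2) continuousOn_const
    (fun t ht => inv_nonneg.mpr (log_pos (hgt t ht)).le) (fun t ht => ?_) hθ
  · have hcard : ∑ p ∈ Finset.Ioc ⌊a⌋₊ ⌊b⌋₊ with p.Prime, (log p)⁻¹ * log p =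
        ((Finset.Ioc ⌊a⌋₊ ⌊b⌋₊).filter Nat.Prime).card := by
      rw [Finset.cast_card]
      refine Finset.sum_congr rfl fun p hp => inv_mul_cancel₀ (log_pos ?_).ne'
      exact_mod_cast (Finset.mem_filter.mp hp).2.one_lt
    simp only [neg_div, neg_neg] at habel
    rw [hcard, intervalIntegral.integral_mul_const,
      integral_inv_div_log_sq ha (ha.trans_le hab)] at habel
    exact habel.trans_eq (by ring)
  · have := hgt t ht
    rw [neg_div]
    exact neg_nonpos.mpr (by positivity)

/-- `∑ 1 / p` over the primes `p ≤ x`, the sum estimated by Mertens' second theorem. -/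
noncomputable def primeRecipSum (x : ℝ) : ℝ :=
  ∑ p ∈ Finset.Ioc 0 ⌊x⌋₊ with p.Prime, (p : ℝ)⁻¹

lemma primeRecipSum_sub {a b : ℝ} (hab : a ≤ b) :
    primeRecipSum b - primeRecipSum a =
      ∑ p ∈ Finset.Ioc ⌊a⌋₊ ⌊b⌋₊ with p.Prime, (p : ℝ)⁻¹ := by
  simp only [primeRecipSum, Finset.sum_filter]
  rw [sub_eq_iff_eq_add', Finset.sum_Ioc_consecutive _ (Nat.zero_le _) (Nat.floor_le_floor hab)]

lemma primeRecipSum_monotone : Monotone primeRecipSum := fun a b hab => by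
  rw [← sub_nonneg, primeRecipSum_sub hab]
  positivity

lemma primeRecipSum_of_lt_two {x : ℝ} (hx : x < 2) : primeRecipSum x = 0 := by
  refine Finset.sum_eq_zero fun p hp => ?_
  rw [Finset.mem_filter, Finset.mem_Ioc, Nat.le_floor_iff' (by grind)] at hp
  have : (2 : ℝ) ≤ p := by exact_mod_cast hp.2.two_le
  linarith [hp.1.2]

lemma hasDerivAt_inv_div_log {t : ℝ} (ht : 1 < t) :
    HasDerivAt (fun t => t⁻¹ / log t) (-((log t + 1) * t⁻¹ ^ 2 / log t ^ 2)) t := by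
  have hlog := log_pos ht
  refine ((hasDerivAt_inv (by linarith)).div (hasDerivAt_log (by linarith)) hlog.ne').congr_deriv ?_
  field_simp
  ring

lemma integral_log_add_one_div_mul_le {a b C : ℝ} {A : ℕ} (ha : exp 1 ≤ a) (hab : a ≤ b)
    (hC : 0 ≤ C) :
    ∫ t in a..b, (log t + 1) * t⁻¹ ^ 2 / log t ^ 2 * (C * (t / log t ^ (A + 1))) ≤
      2 * C / log a ^ (A + 1) := by
  have ha1 : 1 < a := (one_lt_exp_iff.mpr one_pos).trans_le ha
  have hgt : ∀ t ∈ Set.Icc a b, 1 < t := fun t ht => ha1.trans_le ht.1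
  have hne : ∀ t ∈ Set.Icc a b, t ≠ 0 := fun t ht => (one_pos.trans (hgt t ht)).ne'
  have hloga : 1 ≤ log a := (le_log_iff_exp_le (by linarith)).mpr ha
  have hle (t : ℝ) (ht : t ∈ Set.Icc a b) :
      (log t + 1) * t⁻¹ ^ 2 / log t ^ 2 * (C * (t / log t ^ (A + 1))) ≤
        2 * C / log a ^ A * (t⁻¹ / log t ^ 2) := by
    have ht1 := hgt t ht
    have hlog : log a ≤ log t := log_le_log (by linarith) ht.1
    have hlog0 : 0 < log t := by linarith
    calc (log t + 1) * t⁻¹ ^ 2 / log t ^ 2 * (C * (t / log t ^ (A + 1)))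
        ≤ (log t + log t) * t⁻¹ ^ 2 / log t ^ 2 * (C * (t / log t ^ (A + 1))) := by gcongr; linarith
      _ = 2 * C / log t ^ A * (t⁻¹ / log t ^ 2) := by field_simp; ring
      _ ≤ 2 * C / log a ^ A * (t⁻¹ / log t ^ 2) := by gcongr
  calc ∫ t in a..b, (log t + 1) * t⁻¹ ^ 2 / log t ^ 2 * (C * (t / log t ^ (A + 1)))
      ≤ ∫ t in a..b, 2 * C / log a ^ A * (t⁻¹ / log t ^ 2) := by
        refine intervalIntegral.integral_mono_on hab ?_ ?_ hle <;>
          refine ContinuousOn.intervalIntegrable_of_Icc hab ?_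
        · exact (continuousOn_div_log_pow hgt (by fun_prop (disch := assumption)) 2).mul
            (continuousOn_const.mul (continuousOn_div_log_pow hgt continuousOn_id (A + 1)))
        · exact continuousOn_const.mul
            (continuousOn_div_log_pow hgt (by fun_prop (disch := assumption)) 2)
    _ = 2 * C / log a ^ A * ((log a)⁻¹ - (log b)⁻¹) := by
        rw [intervalIntegral.integral_const_mul, integral_inv_div_log_sq ha1 (ha1.trans_le hab)]
    _ ≤ 2 * C / log a ^ A * (log a)⁻¹ := by
        gcongr
        exact sub_le_self _ (inv_nonneg.mpr (log_nonneg (by linarith)))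
    _ = 2 * C / log a ^ (A + 1) := by rw [pow_succ]; field_simp

lemma abs_primeRecipSum_sub_le {a b C : ℝ} {A : ℕ} (ha : exp 1 ≤ a) (hab : a ≤ b) (hC : 0 ≤ C)
    (hθ : ∀ t ∈ Set.Icc a b, |Chebyshev.theta t - t| ≤ C * (t / log t ^ (A + 1))) :
    |primeRecipSum b - primeRecipSum a - (log (log b) - log (log a))| ≤
      4 * C / log a ^ (A + 1) := by
  have ha1 : 1 < a := (one_lt_exp_iff.mpr one_pos).trans_le ha
  have hgt : ∀ t ∈ Set.Icc a b, 1 < t := fun t ht => ha1.trans_le ht.1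
  have hne : ∀ t ∈ Set.Icc a b, t ≠ 0 := fun t ht => (one_pos.trans (hgt t ht)).ne'
  have hloga : 1 ≤ log a := (le_log_iff_exp_le (by linarith)).mpr ha
  have hsum : primeRecipSum b - primeRecipSum a =
      ∑ p ∈ Finset.Ioc ⌊a⌋₊ ⌊b⌋₊ with p.Prime, (p : ℝ)⁻¹ / log p * log p := by
    rw [primeRecipSum_sub hab]
    refine Finset.sum_congr rfl fun p hp => (div_mul_cancel₀ _ (log_pos ?_).ne').symm
    exact_mod_cast (Finset.mem_filter.mp hp).2.one_lt
  have hboundary (t : ℝ) (ht : t ∈ Set.Icc a b) :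
      t⁻¹ / log t * (C * (t / log t ^ (A + 1))) ≤ C / log a ^ (A + 1) := by
    have ht1 := hgt t ht
    have hlog : log a ≤ log t := log_le_log (by linarith) ht.1
    have hlog1 : 1 ≤ log t := hloga.trans hlog
    calc t⁻¹ / log t * (C * (t / log t ^ (A + 1))) = C / log t ^ (A + 1) / log t := by field_simp
      _ ≤ C / log t ^ (A + 1) := div_le_self (by positivity) hlog1
      _ ≤ C / log a ^ (A + 1) := by gcongr
  rw [hsum, ← integral_inv_div_log ha1 (ha1.trans_le hab)]
  refine (abs_sum_primes_mul_log_sub_integral_le (by linarith) hab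
    (fun t ht => hasDerivAt_inv_div_log (hgt t ht))
    (continuousOn_div_log_pow hgt (by fun_prop (disch := assumption)) 2).neg
    (continuousOn_const.mul (continuousOn_div_log_pow hgt continuousOn_id (A + 1)))
    (fun t ht => ?_) (fun t ht => ?_) hθ).trans ?_
  · have := hgt t ht
    have := log_pos this
    positivity
  · have := hgt t ht
    have := log_pos this
    exact neg_nonpos.mpr (by positivity)
  · simp only [neg_neg, Pi.mul_apply, id]
    linarith [hboundary a (Set.left_mem_Icc.mpr hab), hboundary b (Set.right_mem_Icc.mpr hab),
      integral_log_add_one_div_mul_le (A := A) ha hab hC,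
      show 4 * C / log a ^ (A + 1) = 2 * (C / log a ^ (A + 1)) + 2 * C / log a ^ (A + 1) by ring]

lemma eventually_abs_primeRecipSum_sub_le (A : ℕ) : ∃ C, ∀ᶠ a in atTop, ∀ b ≥ a,
    |primeRecipSum b - log (log b) - (primeRecipSum a - log (log a))| ≤
      C / log a ^ A := by
  obtain ⟨C, hC0, hC⟩ := (theta_sub_id_isBigO (A + 1)).exists_nonneg
  obtain ⟨X, hX⟩ := eventually_atTop.mp hC.bound
  refine ⟨4 * C, ?_⟩
  filter_upwards [eventually_ge_atTop (exp 1), eventually_ge_atTop X] with a ha haX b hab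
  have ha1 : 1 < a := (one_lt_exp_iff.mpr one_pos).trans_le ha
  rw [sub_sub_sub_comm]
  have hloga : 1 ≤ log a := (le_log_iff_exp_le (by linarith)).mpr ha
  refine (abs_primeRecipSum_sub_le (A := A) ha hab hC0 fun t ht => ?_).trans
    (div_le_div_of_nonneg_left (by positivity) (by positivity) (pow_le_pow_right₀ hloga A.le_succ))
  have ht1 := ha1.trans_le ht.1
  have := hX t (haX.trans ht.1)
  have hlog := log_pos ht1
  rwa [norm_of_nonneg (by positivity : 0 ≤ t / log t ^ (A + 1))] at this

lemma exists_tendsto_of_eventually_dist_le {E : Type*} [PseudoMetricSpace E] [CompleteSpace E]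
    {g : ℝ → E} {ε : ℝ → ℝ} (hε : Tendsto ε atTop (𝓝 0))
    (hg : ∀ᶠ a in atTop, ∀ b ≥ a, dist (g b) (g a) ≤ ε a) : ∃ c, Tendsto g atTop (𝓝 c) := by
  refine cauchySeq_tendsto_of_complete (Metric.cauchySeq_iff'.mpr fun δ hδ => ?_)
  obtain ⟨a, hga, hεa⟩ := (hg.and (hε.eventually_lt_const hδ)).exists
  exact ⟨a, fun b hb => (hga b hb).trans_lt hεa⟩

theorem exists_primeRecipSum_sub_isBigO : ∃ c, ∀ A : ℕ,
    (fun x => primeRecipSum x - log (log x) - c) =O[atTop] fun x => (log x ^ A)⁻¹ := by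
  obtain ⟨C₀, hC₀⟩ := eventually_abs_primeRecipSum_sub_le 1
  obtain ⟨c, hc⟩ := exists_tendsto_of_eventually_dist_le
    (g := fun x => primeRecipSum x - log (log x)) (ε := fun a => C₀ / log a ^ 1)
    (by simpa using tendsto_log_atTop.const_div_atTop C₀) hC₀
  refine ⟨c, fun A => ?_⟩
  obtain ⟨C, hC⟩ := eventually_abs_primeRecipSum_sub_le A
  refine IsBigO.of_bound C ?_
  filter_upwards [hC, eventually_ge_atTop 1] with x hx hx1
  rw [norm_of_nonneg (inv_nonneg.mpr (pow_nonneg (log_nonneg hx1) A)), ← div_eq_mul_inv,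
    norm_sub_rev]
  refine le_of_tendsto (hc.sub_const (primeRecipSum x - log (log x))).norm ?_
  filter_upwards [eventually_ge_atTop x] with b hb using hx b hb

/-! ### The constant in Mertens' second theorem -/

lemma hasDerivAt_mellin_exp_neg_one :
    MellinConvergent (fun t : ℝ => log t • (exp (-t) : ℂ)) 1 ∧
      HasDerivAt (mellin fun t : ℝ => (exp (-t) : ℂ))
        (mellin (fun t : ℝ => log t • (exp (-t) : ℂ)) 1) 1 := by
  have hcont : Continuous fun t : ℝ => (exp (-t) : ℂ) := by fun_prop
  have h_top : (fun t : ℝ => (exp (-t) : ℂ)) =O[atTop] fun t : ℝ => t ^ (-(2 : ℝ)) := by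
    refine .of_norm_left ((isLittleO_exp_neg_mul_rpow_atTop one_pos (-2)).isBigO.congr_left
      fun t => ?_)
    rw [Complex.norm_real, norm_of_nonneg (exp_pos _).le, neg_one_mul]
  have h_zero : (fun t : ℝ => (exp (-t) : ℂ)) =O[𝓝[>] 0] fun t : ℝ => t ^ (-(0 : ℝ)) := by
    simpa only [neg_zero, rpow_zero] using
      (hcont.continuousAt.tendsto.mono_left nhdsWithin_le_nhds).isBigO_one ℝ
  exact mellin_hasDerivAt_of_isBigO_rpow (hcont.locallyIntegrable.locallyIntegrableOn _)
    h_top (by norm_num) h_zero (by norm_num)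

lemma cpow_one_sub_one_smul_log_smul_exp_neg (t : ℝ) :
    (t : ℂ) ^ ((1 : ℂ) - 1) • (log t • (exp (-t) : ℂ)) = ((log t * exp (-t) : ℝ) : ℂ) := by
  simp

lemma integrableOn_log_mul_exp_neg :
    IntegrableOn (fun t : ℝ => log t * exp (-t)) (Set.Ioi 0) := by
  have h := hasDerivAt_mellin_exp_neg_one.1
  simp_rw [MellinConvergent, cpow_one_sub_one_smul_log_smul_exp_neg] at h
  exact h.re

/-- The Mellin transform of `exp (-t)` is `Γ`, so the integral is `Γ'(1) = -γ`. -/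
lemma integral_log_mul_exp_neg :
    ∫ t in Set.Ioi (0 : ℝ), log t * exp (-t) = -eulerMascheroniConstant := by
  have hΓ : HasDerivAt (mellin fun t : ℝ => (exp (-t) : ℂ)) (-(eulerMascheroniConstant : ℂ)) 1 := by
    have hre : ∀ᶠ s : ℂ in 𝓝 1, 0 < s.re :=
      (Complex.continuous_re.tendsto 1).eventually (lt_mem_nhds (by simp))
    refine Complex.hasDerivAt_Gamma_one.congr_of_eventuallyEq ?_
    filter_upwards [hre] with s hs
    rw [← Complex.GammaIntegral_eq_mellin, Complex.Gamma_eq_integral hs]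
  have h := hasDerivAt_mellin_exp_neg_one.2.unique hΓ
  simp_rw [mellin, cpow_one_sub_one_smul_log_smul_exp_neg] at h
  rw [integral_complex_ofReal] at h
  exact_mod_cast h

section ExponentialDensity

variable {δ : ℝ}

lemma integrableOn_Ioi_mul_exp_neg_mul (hδ : 0 < δ) (a : ℝ) :
    IntegrableOn (fun v => δ * exp (-(δ * v))) (Set.Ioi a) := by
  simp_rw [← neg_mul]
  exact (integrableOn_exp_mul_Ioi (neg_neg_of_pos hδ) a).const_mul δ

lemma integral_Ioi_mul_exp_neg_mul (hδ : 0 < δ) (a : ℝ) :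
    ∫ v in Set.Ioi a, δ * exp (-(δ * v)) = exp (-(δ * a)) := by
  simp_rw [← neg_mul]
  rw [integral_const_mul, integral_exp_mul_Ioi (neg_neg_of_pos hδ)]
  field_simp

lemma log_mul_exp_neg_mul_eqOn (hδ : 0 < δ) :
    Set.EqOn (fun v => log v * (δ * exp (-(δ * v))))
      (fun v => δ * (log (δ * v) * exp (-(δ * v)) - log δ * exp (-(δ * v)))) (Set.Ioi 0) := by
  intro v hv
  simp only [log_mul hδ.ne' (ne_of_gt hv)]
  ring

lemma integrableOn_log_mul_exp_neg_mul (hδ : 0 < δ) :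
    IntegrableOn (fun v => log v * (δ * exp (-(δ * v)))) (Set.Ioi 0) := by
  rw [integrableOn_congr_fun (log_mul_exp_neg_mul_eqOn hδ) measurableSet_Ioi,
    integrableOn_Ioi_comp_mul_left_iff (fun t => δ * (log t * exp (-t) - log δ * exp (-t))) 0 hδ,
    mul_zero]
  exact (integrableOn_log_mul_exp_neg.sub ((integrableOn_exp_neg_Ioi 0).const_mul _)).const_mul _

lemma integral_log_mul_exp_neg_mul (hδ : 0 < δ) :
    ∫ v in Set.Ioi 0, log v * (δ * exp (-(δ * v))) = -eulerMascheroniConstant - log δ := by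
  rw [setIntegral_congr_fun measurableSet_Ioi (log_mul_exp_neg_mul_eqOn hδ),
    integral_comp_mul_left_Ioi (fun t => δ * (log t * exp (-t) - log δ * exp (-t))) 0 hδ,
    mul_zero, integral_const_mul, integral_sub integrableOn_log_mul_exp_neg
      ((integrableOn_exp_neg_Ioi 0).const_mul _), integral_const_mul, integral_log_mul_exp_neg,
    integral_exp_neg_Ioi_zero, smul_eq_mul, inv_mul_cancel_left₀ hδ.ne', mul_one]

lemma norm_mul_exp_neg_mul_le (hδ : 0 < δ) {v : ℝ} (hv : 0 < v) (y : ℝ) :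
    ‖y * (δ * exp (-(δ * v)))‖ ≤ δ * ‖y‖ := by
  have hexp : exp (-(δ * v)) ≤ 1 := exp_le_one_iff.mpr (by nlinarith)
  rw [norm_mul, norm_of_nonneg (by positivity : 0 ≤ δ * exp (-(δ * v))), mul_comm]
  gcongr
  exact mul_le_of_le_one_right hδ.le hexp

lemma integrableOn_mul_exp_neg_mul {e : ℝ → ℝ} (he : IntegrableOn e (Set.Ioi 0)) (hδ : 0 < δ) :
    IntegrableOn (fun v => e v * (δ * exp (-(δ * v)))) (Set.Ioi 0) :=
  (he.norm.const_mul δ).mono' (he.aestronglyMeasurable.mul (by fun_prop))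
    (ae_restrict_of_forall_mem measurableSet_Ioi fun _ hv => norm_mul_exp_neg_mul_le hδ hv _)

lemma tendsto_integral_mul_exp_neg_mul {e : ℝ → ℝ} (he : IntegrableOn e (Set.Ioi 0)) :
    Tendsto (fun δ => ∫ v in Set.Ioi 0, e v * (δ * exp (-(δ * v)))) (𝓝[>] 0) (𝓝 0) := by
  have hlim : Tendsto (fun δ : ℝ => δ * ∫ v in Set.Ioi 0, ‖e v‖) (𝓝[>] 0) (𝓝 0) :=
    tendsto_nhdsWithin_of_tendsto_nhds
      (by simpa using (continuous_id.mul_const (∫ v in Set.Ioi 0, ‖e v‖)).tendsto 0)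
  refine squeeze_zero_norm' ?_ hlim
  filter_upwards [self_mem_nhdsWithin] with δ hδ
  rw [← integral_const_mul]
  exact norm_integral_le_of_norm_le (he.norm.const_mul δ)
    (ae_restrict_of_forall_mem measurableSet_Ioi fun _ hv => norm_mul_exp_neg_mul_le hδ hv _)

lemma tsum_indicator_Ici_log_mul {f : ℕ → ℝ} (hf : f 0 = 0) (h : ℝ → ℝ) (v : ℝ) :
    ∑' n : ℕ, (Set.Ici (log n)).indicator (fun v => f n * h v) v =
      (∑ n ∈ Finset.Ioc 0 ⌊exp v⌋₊, f n) * h v := by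
  have hmem {n : ℕ} (hn : 0 < n) : v ∈ Set.Ici (log n) ↔ n ∈ Finset.Ioc 0 ⌊exp v⌋₊ := by
    rw [Set.mem_Ici, log_le_iff_le_exp (by exact_mod_cast hn), Finset.mem_Ioc,
      Nat.le_floor_iff (exp_pos v).le, and_iff_right hn]
  rw [tsum_eq_sum (s := Finset.Ioc 0 ⌊exp v⌋₊), Finset.sum_mul]
  · exact Finset.sum_congr rfl fun n hn =>
      Set.indicator_of_mem ((hmem (Finset.mem_Ioc.mp hn).1).mpr hn) _
  · intro n hn
    rcases n.eq_zero_or_pos with rfl | hpos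
    · simp [hf]
    · exact Set.indicator_of_notMem (fun hv => hn ((hmem hpos).mp hv)) _

/-- Partial summation for Dirichlet series, in the form `n ^ (-δ) = ∫_{log n}^∞ δ e^{-δv} dv`. -/
lemma tsum_mul_rpow_neg_eq_integral {f : ℕ → ℝ} (hf₀ : f 0 = 0) (hf : ∀ n, 0 ≤ f n) (hδ : 0 < δ)
    (hsum : Summable fun n : ℕ => f n * (n : ℝ) ^ (-δ)) :
    ∑' n : ℕ, f n * (n : ℝ) ^ (-δ) =
      ∫ v, (∑ n ∈ Finset.Ioc 0 ⌊exp v⌋₊, f n) * (δ * exp (-(δ * v))) := by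
  set F : ℕ → ℝ → ℝ :=
    fun n => (Set.Ici (log n)).indicator fun v => f n * (δ * exp (-(δ * v))) with hF
  have hF_int (n : ℕ) : Integrable (F n) := by
    rw [hF, integrable_indicator_iff measurableSet_Ici, integrableOn_Ici_iff_integrableOn_Ioi]
    exact (integrableOn_Ioi_mul_exp_neg_mul hδ _).const_mul _
  have hF_integral (n : ℕ) : ∫ v, F n v = f n * (n : ℝ) ^ (-δ) := by
    rcases n.eq_zero_or_pos with rfl | hn
    · simp [hF, hf₀]
    · rw [hF, integral_indicator measurableSet_Ici, integral_Ici_eq_integral_Ioi,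
        integral_const_mul, integral_Ioi_mul_exp_neg_mul hδ, rpow_def_of_pos (by exact_mod_cast hn),
        mul_neg, mul_comm δ]
  have hF_norm (n : ℕ) (v : ℝ) : ‖F n v‖ = F n v :=
    norm_of_nonneg (Set.indicator_nonneg (fun v _ => by have := hf n; positivity) v)
  have key := hasSum_integral_of_summable_integral_norm hF_int
    (by simpa only [hF_norm, hF_integral] using hsum)
  simp only [hF_integral] at key
  simp only [hF, tsum_indicator_Ici_log_mul hf₀ fun v => δ * exp (-(δ * v))] at key
  exact key.tsum_eq

end ExponentialDensity

/-- The prime zeta function `∑ p, p ^ (-s)` on the real line; it is meaningful for `1 < s`. -/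
noncomputable def primeZeta (s : ℝ) : ℝ := ∑' p : Nat.Primes, (p : ℝ) ^ (-s)

lemma primeZeta_eq_integral {s : ℝ} (hs : 1 < s) :
    primeZeta s =
      ∫ v in Set.Ioi 0, primeRecipSum (exp v) * ((s - 1) * exp (-((s - 1) * v))) := by
  set f : ℕ → ℝ := {n : ℕ | n.Prime}.indicator fun n => (n : ℝ)⁻¹ with hf
  have hf_mul (n : ℕ) :
      f n * (n : ℝ) ^ (-(s - 1)) = {n : ℕ | n.Prime}.indicator (fun n => (n : ℝ) ^ (-s)) n := by
    by_cases hn : n.Prime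
    · rw [hf, Set.indicator_of_mem (show n ∈ {n : ℕ | n.Prime} from hn),
        Set.indicator_of_mem (show n ∈ {n : ℕ | n.Prime} from hn), ← rpow_neg_one,
        ← rpow_add (by exact_mod_cast hn.pos)]
      ring_nf
    · simp [hf, hn]
  have hsum : Summable fun n : ℕ => f n * (n : ℝ) ^ (-(s - 1)) := by
    simp_rw [hf_mul]
    exact (summable_nat_rpow.mpr (by linarith)).indicator _
  have key := tsum_mul_rpow_neg_eq_integral (f := f) (by simp [hf])
    (fun n => Set.indicator_nonneg (fun _ _ => by positivity) n) (sub_pos.mpr hs) hsum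
  have hpartial (v : ℝ) : ∑ n ∈ Finset.Ioc 0 ⌊exp v⌋₊, f n = primeRecipSum (exp v) := by
    simp only [hf, primeRecipSum, Finset.sum_filter, Set.indicator_apply, Set.mem_ofPred_eq]
  simp_rw [hpartial, hf_mul] at key
  rw [primeZeta, setIntegral_eq_integral_of_forall_compl_eq_zero, ← key]
  · exact tsum_subtype {n : ℕ | n.Prime} fun n => (n : ℝ) ^ (-s)
  · intro v hv
    have hexp : exp v ≤ 1 := exp_le_one_iff.mpr (by simpa using hv)
    rw [primeRecipSum_of_lt_two (by linarith), zero_mul]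

lemma integrableOn_primeRecipSum_exp_sub {c : ℝ}
    (hc : (fun x => primeRecipSum x - log (log x) - c) =O[atTop] fun x => (log x ^ 2)⁻¹) :
    IntegrableOn (fun v => primeRecipSum (exp v) - log v - c) (Set.Ioi 0) := by
  have hdecay : (fun v => primeRecipSum (exp v) - log v - c) =O[atTop] fun v : ℝ => v ^ (-2 : ℝ) :=
    (hc.comp_tendsto tendsto_exp_atTop).congr' (.of_forall fun v => by simp)
      ((eventually_ge_atTop 0).mono fun v hv => by simp [rpow_neg hv])
  have hloc (a b : ℝ) : IntervalIntegrable (fun v => primeRecipSum (exp v) - log v - c)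
      volume a b :=
    ((primeRecipSum_monotone.comp exp_monotone).intervalIntegrable.sub
      intervalIntegral.intervalIntegrable_log').sub intervalIntegrable_const
  have hlocal : LocallyIntegrableOn (fun v => primeRecipSum (exp v) - log v - c) (Set.Ici 0) :=
    fun v _ => ⟨Set.Icc (v - 1) (v + 1),
      mem_nhdsWithin_of_mem_nhds (Icc_mem_nhds (by linarith) (by linarith)),
      (intervalIntegrable_iff_integrableOn_Icc_of_le (by linarith)).mp (hloc _ _)⟩
  exact (hlocal.integrableOn_of_isBigO_atTop hdecay
    (integrableAtFilter_rpow_atTop_iff.mpr (by norm_num))).mono_set Set.Ioi_subset_Ici_self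

lemma tendsto_primeZeta_add_log {c : ℝ}
    (hc : (fun x => primeRecipSum x - log (log x) - c) =O[atTop] fun x => (log x ^ 2)⁻¹) :
    Tendsto (fun s => primeZeta s + log (s - 1)) (𝓝[>] 1) (𝓝 (c - eulerMascheroniConstant)) := by
  have he := integrableOn_primeRecipSum_exp_sub hc
  have hsub : Tendsto (fun s : ℝ => s - 1) (𝓝[>] 1) (𝓝[>] 0) :=
    tendsto_nhdsWithin_iff.mpr ⟨tendsto_nhdsWithin_of_tendsto_nhds
      (by simpa using (continuous_sub_right (1 : ℝ)).tendsto 1),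
      eventually_mem_nhdsWithin.mono fun s hs => Set.mem_Ioi.mpr (sub_pos.mpr hs)⟩
  have hlim := ((tendsto_integral_mul_exp_neg_mul he).comp hsub).add_const
    (c - eulerMascheroniConstant)
  rw [zero_add] at hlim
  refine hlim.congr' ?_
  filter_upwards [self_mem_nhdsWithin] with s hs
  have hδ : 0 < s - 1 := sub_pos.mpr hs
  have hsplit (v : ℝ) : primeRecipSum (exp v) * ((s - 1) * exp (-((s - 1) * v))) =
      (primeRecipSum (exp v) - log v - c) * ((s - 1) * exp (-((s - 1) * v))) +
        log v * ((s - 1) * exp (-((s - 1) * v))) + c * ((s - 1) * exp (-((s - 1) * v))) := by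
    ring
  have he_int := integrableOn_mul_exp_neg_mul he hδ
  have hlog_int := integrableOn_log_mul_exp_neg_mul hδ
  simp only [Function.comp_def, primeZeta_eq_integral hs, hsplit]
  rw [integral_add (he_int.fun_add hlog_int) ((integrableOn_Ioi_mul_exp_neg_mul hδ 0).const_mul c),
    integral_add he_int hlog_int, integral_log_mul_exp_neg_mul hδ, integral_const_mul,
    integral_Ioi_mul_exp_neg_mul hδ, mul_zero, neg_zero, exp_zero]
  ring

/-- The part `z ^ 2 / 2 + z ^ 3 / 3 + ⋯` of order at least two of `-log (1 - z)`. -/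
noncomputable def negLogTail (z : ℝ) : ℝ := -log (1 - z) - z

lemma norm_negLogTail_le {z : ℝ} (h0 : 0 ≤ z) (h1 : z ≤ 1 / 2) : ‖negLogTail z‖ ≤ 2 * z ^ 2 := by
  have h := abs_log_sub_add_sum_range_le (x := z) (by rw [abs_of_nonneg h0]; linarith) 1
  have hneg : negLogTail z = -(z + log (1 - z)) := by rw [negLogTail]; ring
  rw [hneg, norm_neg, norm_eq_abs]
  refine (by simpa [abs_of_nonneg h0] using h : |z + log (1 - z)| ≤ z ^ 2 / (1 - z)).trans ?_
  rw [div_le_iff₀ (by linarith)]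
  nlinarith [sq_nonneg z]

lemma negLogTail_eq_tsum {z : ℝ} (hz : |z| < 1) :
    negLogTail z = ∑' k : ℕ, z ^ (k + 2) / (k + 2) := by
  have h := hasSum_pow_div_log_of_abs_lt_one hz
  have hsplit := h.summable.tsum_eq_zero_add
  rw [h.tsum_eq] at hsplit
  simp only [negLogTail, hsplit, CharP.cast_eq_zero, zero_add, pow_one, div_one,
    add_sub_cancel_left]
  exact tsum_congr fun k => by push_cast; ring_nf

lemma prime_rpow_neg_le_inv {s : ℝ} (hs : 1 ≤ s) (p : Nat.Primes) :
    (p : ℝ) ^ (-s) ≤ (p : ℝ)⁻¹ := by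
  rw [← rpow_neg_one]
  exact rpow_le_rpow_of_exponent_le (by exact_mod_cast p.2.one_le) (by linarith)

lemma inv_prime_le_half (p : Nat.Primes) : (p : ℝ)⁻¹ ≤ 1 / 2 := by
  rw [one_div]
  exact inv_anti₀ two_pos (by exact_mod_cast p.2.two_le)

lemma norm_negLogTail_prime_rpow_le {s : ℝ} (hs : 1 ≤ s) (p : Nat.Primes) :
    ‖negLogTail ((p : ℝ) ^ (-s))‖ ≤ 2 * (p : ℝ)⁻¹ ^ 2 :=
  have hle := prime_rpow_neg_le_inv hs p
  (norm_negLogTail_le (by positivity) (hle.trans (inv_prime_le_half p))).trans (by gcongr)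

lemma summable_two_mul_inv_prime_sq : Summable fun p : Nat.Primes => 2 * (p : ℝ)⁻¹ ^ 2 :=
  have h : Summable fun n : ℕ => (n : ℝ)⁻¹ ^ 2 := by simp
  (h.comp_injective Subtype.val_injective).mul_left 2

lemma log_riemannZeta_re_eq_tsum {s : ℝ} (hs : 1 < s) :
    log (riemannZeta s).re = ∑' p : Nat.Primes, -log (1 - (p : ℝ) ^ (-s)) := by
  have h := riemannZeta_eulerProduct_exp_log (s := s) (by simpa using hs)
  have hreal (p : Nat.Primes) :
      -Complex.log (1 - (p : ℂ) ^ (-(s : ℂ))) = ((-log (1 - (p : ℝ) ^ (-s)) : ℝ) : ℂ) := by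
    have hp := (prime_rpow_neg_le_inv hs.le p).trans (inv_prime_le_half p)
    rw [Complex.ofReal_neg, Complex.ofReal_log (by linarith), Complex.ofReal_sub,
      Complex.ofReal_cpow (by positivity)]
    simp
  simp_rw [hreal] at h
  rw [← Complex.ofReal_tsum, ← Complex.ofReal_exp] at h
  rw [← h, Complex.ofReal_re, log_exp]

lemma log_riemannZeta_re_eq_primeZeta_add {s : ℝ} (hs : 1 < s) :
    log (riemannZeta s).re = primeZeta s + ∑' p : Nat.Primes, negLogTail ((p : ℝ) ^ (-s)) := by
  have htail : Summable fun p : Nat.Primes => negLogTail ((p : ℝ) ^ (-s)) :=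
    summable_two_mul_inv_prime_sq.of_norm_bounded (norm_negLogTail_prime_rpow_le hs.le)
  have hprimes : Summable fun p : Nat.Primes => (p : ℝ) ^ (-s) :=
    Nat.Primes.summable_rpow.mpr (by linarith)
  rw [log_riemannZeta_re_eq_tsum hs, primeZeta, ← hprimes.tsum_add htail]
  exact tsum_congr fun p => by rw [negLogTail]; ring

lemma tendsto_tsum_negLogTail :
    Tendsto (fun s : ℝ => ∑' p : Nat.Primes, negLogTail ((p : ℝ) ^ (-s))) (𝓝[>] 1)
      (𝓝 (∑' p : Nat.Primes, negLogTail (p : ℝ)⁻¹)) := by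
  refine tendsto_tsum_of_dominated_convergence summable_two_mul_inv_prime_sq (fun p => ?_) ?_
  · have hp : (p : ℝ) ≠ 0 := by exact_mod_cast p.2.ne_zero
    have hp' : 1 - (p : ℝ) ^ (-1 : ℝ) ≠ 0 := by
      rw [rpow_neg_one]
      linarith [inv_prime_le_half p]
    have hcont : ContinuousAt (fun s : ℝ => negLogTail ((p : ℝ) ^ (-s))) 1 := by
      unfold negLogTail
      fun_prop (disch := simpa using ‹_›)
    rw [← rpow_neg_one]
    exact tendsto_nhdsWithin_of_tendsto_nhds hcont
  · filter_upwards [self_mem_nhdsWithin] with s hs p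
    exact norm_negLogTail_prime_rpow_le (le_of_lt hs) p

lemma mertensB1_eq_sub_tsum_negLogTail :
    mertensB1 = eulerMascheroniConstant - ∑' p : Nat.Primes, negLogTail (p : ℝ)⁻¹ := by
  rw [mertensB1]
  congr 1
  refine tsum_congr fun p => ?_
  have hp : |(p : ℝ)⁻¹| < 1 := by
    rw [abs_of_nonneg (by positivity)]
    linarith [inv_prime_le_half p]
  rw [negLogTail_eq_tsum hp]
  exact tsum_congr fun k => by rw [inv_pow]; field_simp

lemma eq_mertensB1_of_isBigO {c : ℝ}
    (hc : (fun x => primeRecipSum x - log (log x) - c) =O[atTop] fun x => (log x ^ 2)⁻¹) :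
    c = mertensB1 := by
  have hzeta : Tendsto (fun s : ℝ => log (riemannZeta s).re + log (s - 1)) (𝓝[>] 1) (𝓝 0) :=
    (isLittleO_one_iff ℝ).mp log_riemannZeta_add_log_sub_isLittleO_ofReal
  have hprime : Tendsto (fun s => primeZeta s + log (s - 1)) (𝓝[>] 1)
      (𝓝 (0 - ∑' p : Nat.Primes, negLogTail (p : ℝ)⁻¹)) := by
    refine (hzeta.sub tendsto_tsum_negLogTail).congr' ?_
    filter_upwards [self_mem_nhdsWithin] with s hs
    rw [log_riemannZeta_re_eq_primeZeta_add hs]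
    ring
  have hlim := tendsto_nhds_unique (tendsto_primeZeta_add_log hc) hprime
  rw [mertensB1_eq_sub_tsum_negLogTail]
  linarith

theorem primeRecipSum_sub_isBigO (A : ℕ) :
    (fun x => primeRecipSum x - log (log x) - mertensB1) =O[atTop] fun x => (log x ^ A)⁻¹ := by
  obtain ⟨c, hc⟩ := exists_primeRecipSum_sub_isBigO
  rw [← eq_mertensB1_of_isBigO (hc 2)]
  exact hc A

/-! ### The hyperbola method -/

lemma sum_card_primeFactors (N : ℕ) :
    ∑ n ∈ Finset.Icc 1 N, (n.primeFactors.card : ℝ) =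
      ∑ p ∈ Finset.Ioc 0 N with p.Prime, ((N / p : ℕ) : ℝ) := by
  have hcard : ∀ n ∈ Finset.Icc 1 N, (n.primeFactors.card : ℝ) =
      ∑ p ∈ Finset.Ioc 0 N with p.Prime, if p ∣ n then (1 : ℝ) else 0 := by
    intro n hn
    rw [Finset.mem_Icc] at hn
    rw [Finset.sum_boole]
    congr 2
    ext p
    simp only [Nat.mem_primeFactors, Finset.mem_filter, Finset.mem_Ioc]
    constructor
    · rintro ⟨hp, hpn, -⟩
      exact ⟨⟨⟨hp.pos, (Nat.le_of_dvd hn.1 hpn).trans hn.2⟩, hp⟩, hpn⟩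
    · rintro ⟨⟨-, hp⟩, hpn⟩
      exact ⟨hp, hpn, by omega⟩
  rw [Finset.sum_congr rfl hcard, Finset.sum_comm]
  refine Finset.sum_congr rfl fun p _ => ?_
  rw [Finset.sum_boole, ← Nat.Ioc_filter_dvd_card_eq_div]
  rfl

lemma card_primes_Ioc_div_eq_sum {N y m : ℕ} (hm : 1 ≤ m) :
    (((Finset.Ioc (N / y) (N / m)).filter Nat.Prime).card : ℝ) =
      ∑ p ∈ Finset.Ioc (N / y) N with p.Prime, if m ≤ N / p then (1 : ℝ) else 0 := by
  rw [Finset.sum_boole]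
  congr 2
  ext p
  simp only [Finset.mem_filter, Finset.mem_Ioc]
  have hiff (hp : p.Prime) : p ≤ N / m ↔ m ≤ N / p := by
    rw [Nat.le_div_iff_mul_le hm, Nat.le_div_iff_mul_le hp.pos, mul_comm]
  constructor
  · rintro ⟨⟨hlt, hle⟩, hp⟩
    exact ⟨⟨⟨hlt, hle.trans (Nat.div_le_self N m)⟩, hp⟩, (hiff hp).mp hle⟩
  · rintro ⟨⟨⟨hlt, -⟩, hp⟩, hle⟩
    exact ⟨⟨hlt, (hiff hp).mpr hle⟩, hp⟩

/-- Dirichlet's hyperbola argument: both sides count the pairs `(m, p)` with `p > N / y` and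
`m * p ≤ N`. -/
lemma sum_large_primes_div_eq_sum_card {N y : ℕ} (hy : 0 < y) :
    ∑ p ∈ Finset.Ioc (N / y) N with p.Prime, ((N / p : ℕ) : ℝ) =
      ∑ m ∈ Finset.Icc 1 y, (((Finset.Ioc (N / y) (N / m)).filter Nat.Prime).card : ℝ) := by
  rw [Finset.sum_congr rfl fun m hm => card_primes_Ioc_div_eq_sum (Finset.mem_Icc.mp hm).1,
    Finset.sum_comm]
  refine Finset.sum_congr rfl fun p hp => ?_
  simp only [Finset.mem_filter, Finset.mem_Ioc] at hp
  have hlt : N / p < y := by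
    rw [Nat.div_lt_iff_lt_mul hp.2.pos, mul_comm]
    exact (Nat.div_lt_iff_lt_mul hy).mp hp.1.1
  have hfilter : (Finset.Icc 1 y).filter (· ≤ N / p) = Finset.Icc 1 (N / p) := by
    ext m
    simp only [Finset.mem_filter, Finset.mem_Icc]
    omega
  rw [Finset.sum_boole, hfilter, Nat.card_Icc, Nat.add_sub_cancel]

lemma abs_sum_small_primes_div_sub_le {x z : ℝ} (hx : 0 ≤ x) (hz : 0 ≤ z) :
    |∑ p ∈ Finset.Ioc 0 ⌊z⌋₊ with p.Prime, ((⌊x⌋₊ / p : ℕ) : ℝ) - x * primeRecipSum z| ≤ z := by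
  rw [primeRecipSum, Finset.mul_sum, ← Finset.sum_sub_distrib]
  have hterm (p : ℕ) : |((⌊x⌋₊ / p : ℕ) : ℝ) - x * (p : ℝ)⁻¹| ≤ 1 := by
    have hle := Nat.floor_le (show 0 ≤ x / p by positivity)
    have hlt := Nat.lt_floor_add_one (x / p)
    rw [← Nat.floor_div_natCast, ← div_eq_mul_inv, abs_le]
    constructor <;> linarith
  calc _ ≤ _ := Finset.abs_sum_le_sum_abs _ _
    _ ≤ (((Finset.Ioc 0 ⌊z⌋₊).filter Nat.Prime).card • 1 : ℝ) :=
      Finset.sum_le_card_nsmul _ _ 1 fun p _ => hterm p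
    _ ≤ ⌊z⌋₊ := by
      rw [nsmul_eq_mul, mul_one]
      exact_mod_cast (Finset.card_filter_le _ _).trans (Nat.card_Ioc 0 ⌊z⌋₊).le
    _ ≤ z := Nat.floor_le hz

lemma sum_indicator_Ici_natCast (g : ℝ → ℝ) {y : ℕ} {u : ℝ} (hu : 0 ≤ u) (huy : u ≤ y) :
    ∑ m ∈ Finset.Icc 1 y, (Set.Ici (m : ℝ)).indicator g u = (⌊u⌋₊ : ℝ) * g u := by
  have hfilter : (Finset.Icc 1 y).filter (fun m : ℕ => (m : ℝ) ≤ u) = Finset.Icc 1 ⌊u⌋₊ := by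
    ext m
    have hmy (hm : (m : ℝ) ≤ u) : m ≤ y := by exact_mod_cast hm.trans huy
    simp only [Finset.mem_filter, Finset.mem_Icc, Nat.le_floor_iff hu]
    tauto
  simp only [Set.indicator_apply, Set.mem_Ici]
  rw [← Finset.sum_filter, hfilter, Finset.sum_const, Nat.card_Icc, nsmul_eq_mul,
    Nat.add_sub_cancel]

lemma sum_integral_eq_integral_floor_mul {y : ℕ} {g : ℝ → ℝ} (hy : 1 ≤ y)
    (hg : IntegrableOn g (Set.Icc 1 (y : ℝ))) :
    ∑ m ∈ Finset.Icc 1 y, ∫ u in (m : ℝ)..y, g u = ∫ u in (1 : ℝ)..y, (⌊u⌋₊ : ℝ) * g u := by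
  have hind : ∀ m ∈ Finset.Icc 1 y, ∫ u in (m : ℝ)..y, g u =
      ∫ u in Set.Icc 1 (y : ℝ), (Set.Ici (m : ℝ)).indicator g u := by
    intro m hm
    rw [Finset.mem_Icc] at hm
    have hm1 : (1 : ℝ) ≤ m := by exact_mod_cast hm.1
    rw [intervalIntegral.integral_of_le (by exact_mod_cast hm.2), ← integral_Icc_eq_integral_Ioc,
      setIntegral_indicator measurableSet_Ici, ← Set.Ici_inter_Iic, ← Set.Ici_inter_Iic,
      Set.inter_right_comm, Set.Ici_inter_Ici, sup_eq_right.mpr hm1]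
  rw [Finset.sum_congr rfl hind, ← integral_finsetSum _ fun m _ => hg.indicator measurableSet_Ici,
    intervalIntegral.integral_of_le (by exact_mod_cast hy), ← integral_Icc_eq_integral_Ioc]
  exact setIntegral_congr_fun measurableSet_Icc fun u hu =>
    sum_indicator_Ici_natCast g (zero_le_one.trans hu.1) hu.2

section ReciprocalLogIntegral

variable {L x y : ℝ}

lemma sub_log_pos_of_mem_Icc (hL : log y < L) {u : ℝ} (hu : u ∈ Set.Icc 1 y) : 0 < L - log u :=
  sub_pos.mpr ((log_le_log (zero_lt_one.trans_le hu.1) hu.2).trans_lt hL)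

lemma continuousOn_inv_pow_mul_sub_log (hL : log y < L) (n : ℕ) :
    ContinuousOn (fun u => (u ^ n * (L - log u))⁻¹) (Set.Icc 1 y) := by
  have hne : ∀ u ∈ Set.Icc 1 y, u ≠ 0 := fun u hu => (zero_lt_one.trans_le hu.1).ne'
  have hprod : ∀ u ∈ Set.Icc 1 y, u ^ n * (L - log u) ≠ 0 := fun u hu =>
    mul_ne_zero (pow_ne_zero n (hne u hu)) (sub_log_pos_of_mem_Icc hL hu).ne'
  fun_prop (disch := assumption)

lemma integral_inv_log_eq_mul_integral {m : ℝ} (hm : 1 ≤ m) (hmy : m ≤ y) (hyx : y < x) :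
    ∫ t in (x / y)..(x / m), (log t)⁻¹ = x * ∫ u in m..y, (u ^ 2 * (log x - log u))⁻¹ := by
  have hpos : ∀ u ∈ Set.uIcc m y, 0 < u ∧ u < x := fun u hu => by
    rw [Set.uIcc_of_le hmy] at hu
    exact ⟨by linarith [hu.1], hu.2.trans_lt hyx⟩
  have hderiv : ∀ u ∈ Set.uIcc m y, HasDerivAt (fun u => x / u) (-(x / u ^ 2)) u := fun u hu => by
    simpa [div_eq_mul_inv] using (hasDerivAt_inv (hpos u hu).1.ne').const_mul x
  have hderiv_cont : ContinuousOn (fun u => -(x / u ^ 2)) (Set.uIcc m y) :=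
    (continuousOn_const.div (by fun_prop) fun u hu => (pow_pos (hpos u hu).1 2).ne').neg
  have hlog_cont : ContinuousOn (fun t => (log t)⁻¹) ((fun u => x / u) '' Set.uIcc m y) := by
    have hgt : ∀ t ∈ (fun u => x / u) '' Set.uIcc m y, 1 < t := by
      rintro _ ⟨u, hu, rfl⟩
      exact (one_lt_div (hpos u hu).1).mpr (hpos u hu).2
    exact (continuousOn_log.mono fun t ht => (zero_lt_one.trans (hgt t ht)).ne').inv₀
      fun t ht => (log_pos (hgt t ht)).ne'
  rw [intervalIntegral.integral_symm,
    ← intervalIntegral.integral_comp_mul_deriv' hderiv hderiv_cont hlog_cont,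
    ← intervalIntegral.integral_neg, ← intervalIntegral.integral_const_mul]
  refine intervalIntegral.integral_congr fun u hu => ?_
  obtain ⟨hu0, hux⟩ := hpos u hu
  simp only [Function.comp]
  rw [log_div (hu0.trans hux).ne' hu0.ne', mul_inv]
  ring

lemma integral_inv_mul_sub_log (hy : 1 ≤ y) (hL : log y < L) :
    ∫ u in (1 : ℝ)..y, (u ^ 1 * (L - log u))⁻¹ = log L - log (L - log y) := by
  rw [intervalIntegral.integral_eq_sub_of_hasDerivAt (f := fun u => -log (L - log u))]
  · simp only [log_one, sub_zero]
    ring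
  · intro u hu
    rw [Set.uIcc_of_le hy] at hu
    have hu0 : u ≠ 0 := (zero_lt_one.trans_le hu.1).ne'
    have hderiv := ((hasDerivAt_log hu0).const_sub L).log (sub_log_pos_of_mem_Icc hL hu).ne'
    refine hderiv.fun_neg.congr_deriv ?_
    rw [pow_one, mul_inv]
    ring
  · exact ((Set.uIcc_of_le hy).symm ▸ continuousOn_inv_pow_mul_sub_log hL 1).intervalIntegrable

/-- The integral `∫₁^y {u} / (u² (L - log u)) du`, from which the constants `cconst n` arise by
expanding `1 / (L - log u)` in powers of `log u / L`. -/
noncomputable def fractLogIntegral (L y : ℝ) : ℝ :=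
  ∫ u in (1 : ℝ)..y, Int.fract u * (u ^ 2 * (L - log u))⁻¹

lemma norm_fract_mul_le (u z : ℝ) : ‖Int.fract u * z‖ ≤ ‖z‖ := by
  rw [norm_mul, norm_of_nonneg (Int.fract_nonneg u)]
  exact mul_le_of_le_one_left (norm_nonneg _) (Int.fract_lt_one u).le

lemma integrableOn_fract_mul {s : Set ℝ} {g : ℝ → ℝ} (hg : IntegrableOn g s) :
    IntegrableOn (fun u => Int.fract u * g u) s :=
  Integrable.mono hg (measurable_fract.aestronglyMeasurable.mul hg.aestronglyMeasurable)
    (.of_forall fun u => norm_fract_mul_le u (g u))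

lemma integral_floor_mul_eq_sub_fractLogIntegral (hy : 1 ≤ y) (hL : log y < L) :
    ∫ u in (1 : ℝ)..y, (⌊u⌋₊ : ℝ) * (u ^ 2 * (L - log u))⁻¹ =
      log L - log (L - log y) - fractLogIntegral L y := by
  have hint (n : ℕ) : IntervalIntegrable (fun u => (u ^ n * (L - log u))⁻¹) volume 1 y :=
    ((Set.uIcc_of_le hy).symm ▸ continuousOn_inv_pow_mul_sub_log hL n).intervalIntegrable
  have hfract : IntervalIntegrable (fun u => Int.fract u * (u ^ 2 * (L - log u))⁻¹) volume 1 y :=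
    (intervalIntegrable_iff_integrableOn_Ioc_of_le hy).mpr (integrableOn_fract_mul
      ((intervalIntegrable_iff_integrableOn_Ioc_of_le hy).mp (hint 2)))
  rw [← integral_inv_mul_sub_log hy hL, fractLogIntegral,
    ← intervalIntegral.integral_sub (hint 1) hfract]
  refine intervalIntegral.integral_congr fun u hu => ?_
  rw [Set.uIcc_of_le hy] at hu
  have hu0 : 0 < u := zero_lt_one.trans_le hu.1
  have hL0 := sub_log_pos_of_mem_Icc hL hu
  have hfloor : (⌊u⌋₊ : ℝ) = u - Int.fract u := by
    rw [Int.self_sub_fract, natCast_floor_eq_intCast_floor hu0.le]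
  simp only [hfloor]
  field_simp

end ReciprocalLogIntegral

lemma sum_integral_inv_log_eq {x : ℝ} {y : ℕ} (hy : 1 ≤ y) (hyx : (y : ℝ) < x) :
    ∑ m ∈ Finset.Icc 1 y, ∫ t in (x / y)..(x / m), (log t)⁻¹ =
      x * (log (log x) - log (log (x / y)) - fractLogIntegral (log x) y) := by
  have hy1 : (1 : ℝ) ≤ y := by exact_mod_cast hy
  have hy0 : (0 : ℝ) < y := zero_lt_one.trans_le hy1
  have hlog : log y < log x := log_lt_log hy0 hyx
  have hsubst : ∀ m ∈ Finset.Icc 1 y, ∫ t in (x / y)..(x / m), (log t)⁻¹ =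
      x * ∫ u in (m : ℝ)..y, (u ^ 2 * (log x - log u))⁻¹ := fun m hm =>
    integral_inv_log_eq_mul_integral (by exact_mod_cast (Finset.mem_Icc.mp hm).1)
      (by exact_mod_cast (Finset.mem_Icc.mp hm).2) hyx
  rw [Finset.sum_congr rfl hsubst, ← Finset.mul_sum, sum_integral_eq_integral_floor_mul hy
      (continuousOn_inv_pow_mul_sub_log hlog 2).integrableOn_Icc,
    integral_floor_mul_eq_sub_fractLogIntegral hy1 hlog, log_div (hy0.trans hyx).ne' hy0.ne']

lemma abs_sum_large_primes_div_sub_le {x E : ℝ} {y : ℕ} (hy : 1 ≤ y) (hyx : (y : ℝ) < x)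
    (hθ : ∀ t ∈ Set.Icc (x / y) x, |Chebyshev.theta t - t| ≤ E) :
    |∑ p ∈ Finset.Ioc (⌊x⌋₊ / y) ⌊x⌋₊ with p.Prime, ((⌊x⌋₊ / p : ℕ) : ℝ) -
        x * (log (log x) - log (log (x / y)) - fractLogIntegral (log x) y)| ≤
      y * (2 * (log (x / y))⁻¹ * E) := by
  rw [sum_large_primes_div_eq_sum_card hy, ← sum_integral_inv_log_eq hy hyx,
    ← Finset.sum_sub_distrib]
  have hy0 : (0 : ℝ) < y := by exact_mod_cast hy
  have hx0 : 0 ≤ x := (hy0.trans hyx).le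
  have hterm : ∀ m ∈ Finset.Icc 1 y,
      |(((Finset.Ioc (⌊x⌋₊ / y) (⌊x⌋₊ / m)).filter Nat.Prime).card : ℝ) -
        ∫ t in (x / y)..(x / m), (log t)⁻¹| ≤ 2 * (log (x / y))⁻¹ * E := by
    intro m hm
    rw [Finset.mem_Icc] at hm
    have hm1 : (1 : ℝ) ≤ m := by exact_mod_cast hm.1
    have hmy : (m : ℝ) ≤ y := by exact_mod_cast hm.2
    rw [← Nat.floor_div_natCast, ← Nat.floor_div_natCast]
    exact abs_card_primes_Ioc_sub_integral_le ((one_lt_div hy0).mpr hyx)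
      (div_le_div_of_nonneg_left hx0 (by linarith) hmy)
      fun t ht => hθ t ⟨ht.1, ht.2.trans (div_le_self hx0 hm1)⟩
  refine (Finset.abs_sum_le_sum_abs _ _).trans ((Finset.sum_le_card_nsmul _ _ _ hterm).trans ?_)
  rw [Nat.card_Icc, Nat.add_sub_cancel, nsmul_eq_mul]

/-! ### Expansion in powers of `1 / log x` -/

lemma log_pow_le_mul_rpow_half (n : ℕ) {u : ℝ} (hu : 1 ≤ u) :
    log u ^ n ≤ 2 ^ n * n.factorial * u ^ (1 / 2 : ℝ) := by
  have h := pow_div_factorial_le_exp _ (div_nonneg (log_nonneg hu) zero_le_two) n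
  rw [div_pow, div_div, div_le_iff₀ (by positivity), div_eq_mul_one_div (log u),
    ← rpow_def_of_pos (zero_lt_one.trans_le hu)] at h
  linarith

lemma norm_log_pow_div_sq_le (n : ℕ) {u : ℝ} (hu : 1 ≤ u) :
    ‖log u ^ n / u ^ 2‖ ≤ 2 ^ n * n.factorial * u ^ (-(3 / 2) : ℝ) := by
  have hu0 : 0 < u := zero_lt_one.trans_le hu
  have hlog := log_nonneg hu
  rw [norm_of_nonneg (by positivity), div_le_iff₀ (by positivity), mul_assoc, ← rpow_natCast u 2,
    ← rpow_add hu0, show (-(3 / 2) : ℝ) + (2 : ℕ) = 1 / 2 by norm_num]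
  exact log_pow_le_mul_rpow_half n hu

lemma integrableOn_log_pow_div_sq (n : ℕ) :
    IntegrableOn (fun u => log u ^ n / u ^ 2) (Set.Ioi 1) :=
  ((integrableOn_Ioi_rpow_of_lt (by norm_num) one_pos).const_mul _).mono'
    (by fun_prop : Measurable fun u : ℝ => log u ^ n / u ^ 2).aestronglyMeasurable
    (ae_restrict_of_forall_mem measurableSet_Ioi fun _ hu => norm_log_pow_div_sq_le n (le_of_lt hu))

lemma integrableOn_fract_mul_log_pow_div_sq (n : ℕ) :
    IntegrableOn (fun u => Int.fract u * log u ^ n / u ^ 2) (Set.Ioi 1) := by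
  simp_rw [mul_div_assoc]
  exact integrableOn_fract_mul (integrableOn_log_pow_div_sq n)

lemma norm_integral_Ioi_fract_mul_log_pow_div_sq_le (n : ℕ) {y : ℝ} (hy : 1 ≤ y) :
    ‖∫ u in Set.Ioi y, Int.fract u * log u ^ n / u ^ 2‖ ≤
      2 ^ (n + 1) * n.factorial * y ^ (-(1 / 2) : ℝ) := by
  have hy0 : 0 < y := zero_lt_one.trans_le hy
  have hint : IntegrableOn (fun u : ℝ => (2 : ℝ) ^ n * n.factorial * u ^ (-(3 / 2) : ℝ))
      (Set.Ioi y) :=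
    (integrableOn_Ioi_rpow_of_lt (by norm_num) hy0).const_mul _
  refine (norm_integral_le_of_norm_le hint (ae_restrict_of_forall_mem measurableSet_Ioi
    fun u hu => ?_)).trans_eq ?_
  · rw [mul_div_assoc]
    exact (norm_fract_mul_le _ _).trans (norm_log_pow_div_sq_le n (hy.trans (le_of_lt hu)))
  · rw [integral_const_mul, integral_Ioi_rpow_of_lt (by norm_num) hy0,
      show (-(3 / 2) : ℝ) + 1 = -(1 / 2) by norm_num]
    ring

lemma cconst_mul_factorial_eq_add (n : ℕ) {y : ℝ} (hy : 1 ≤ y) :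
    cconst n * n.factorial = (∫ u in (1 : ℝ)..y, Int.fract u * log u ^ n / u ^ 2) +
      ∫ u in Set.Ioi y, Int.fract u * log u ^ n / u ^ 2 := by
  have hint := integrableOn_fract_mul_log_pow_div_sq n
  rw [intervalIntegral.integral_of_le hy, ← setIntegral_union (Set.Ioc_disjoint_Ioi le_rfl)
    measurableSet_Ioi (hint.mono_set Set.Ioc_subset_Ioi_self)
    (hint.mono_set (Set.Ioi_subset_Ioi hy)), Set.Ioc_union_Ioi_eq_Ioi hy, cconst]
  field_simp

lemma inv_sub_eq_sum_add {L l : ℝ} (hL : L ≠ 0) (hl : L - l ≠ 0) (k : ℕ) :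
    (L - l)⁻¹ = ∑ n ∈ Finset.range k, l ^ n / L ^ (n + 1) + l ^ k / (L ^ k * (L - l)) := by
  induction k with
  | zero => simp
  | succ k ih =>
    rw [ih, Finset.sum_range_succ, add_assoc]
    congr 1
    field_simp
    ring

lemma norm_fract_mul_inv_sub_sum_le {L u : ℝ} (k : ℕ) (hL : 0 < L) (hu : 1 ≤ u)
    (huL : log u ≤ L / 2) :
    ‖Int.fract u * (u ^ 2 * (L - log u))⁻¹ -
        ∑ n ∈ Finset.range k, Int.fract u * log u ^ n / u ^ 2 / L ^ (n + 1)‖ ≤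
      2 / L ^ (k + 1) * (log u ^ k / u ^ 2) := by
  have hlog := log_nonneg hu
  have hsub : 0 < L - log u := by linarith
  have hremainder : Int.fract u * (u ^ 2 * (L - log u))⁻¹ -
      ∑ n ∈ Finset.range k, Int.fract u * log u ^ n / u ^ 2 / L ^ (n + 1) =
        Int.fract u * (log u ^ k / u ^ 2 * (L ^ k * (L - log u))⁻¹) := by
    have hfactor : ∑ n ∈ Finset.range k, Int.fract u * log u ^ n / u ^ 2 / L ^ (n + 1) =
        Int.fract u * (u ^ 2)⁻¹ * ∑ n ∈ Finset.range k, log u ^ n / L ^ (n + 1) := by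
      rw [Finset.mul_sum]
      exact Finset.sum_congr rfl fun n _ => by ring
    rw [hfactor, mul_inv, inv_sub_eq_sum_add hL.ne' hsub.ne' k]
    ring
  rw [hremainder]
  refine (norm_fract_mul_le _ _).trans ?_
  rw [norm_of_nonneg (by positivity), mul_comm]
  gcongr
  rw [inv_eq_one_div, div_le_div_iff₀ (by positivity) (by positivity), pow_succ]
  nlinarith [pow_pos hL k]

lemma norm_fractLogIntegral_sub_sum_le {L y : ℝ} (k : ℕ) (hL : 0 < L) (hy : 1 ≤ y)
    (hyL : log y ≤ L / 2) :
    ‖fractLogIntegral L y - ∑ n ∈ Finset.range k,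
        (∫ u in (1 : ℝ)..y, Int.fract u * log u ^ n / u ^ 2) / L ^ (n + 1)‖ ≤
      2 / L ^ (k + 1) * ∫ u in Set.Ioi 1, log u ^ k / u ^ 2 := by
  have hint : IntervalIntegrable (fun u => Int.fract u * (u ^ 2 * (L - log u))⁻¹) volume 1 y :=
    (intervalIntegrable_iff_integrableOn_Icc_of_le hy).mpr (integrableOn_fract_mul
      (continuousOn_inv_pow_mul_sub_log (by linarith) 2).integrableOn_Icc)
  have hint_term (n : ℕ) : IntervalIntegrable
      (fun u => Int.fract u * log u ^ n / u ^ 2 / L ^ (n + 1)) volume 1 y :=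
    ((intervalIntegrable_iff_integrableOn_Ioc_of_le hy).mpr
      ((integrableOn_fract_mul_log_pow_div_sq n).mono_set Set.Ioc_subset_Ioi_self)).div_const _
  have hint_sum : IntervalIntegrable (fun u => ∑ n ∈ Finset.range k,
      Int.fract u * log u ^ n / u ^ 2 / L ^ (n + 1)) volume 1 y := by
    simpa only [Finset.sum_fn] using IntervalIntegrable.sum _ fun n _ => hint_term n
  have hmono := integrableOn_log_pow_div_sq k
  simp_rw [fractLogIntegral, ← intervalIntegral.integral_div]
  rw [← intervalIntegral.integral_finsetSum fun n _ => hint_term n,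
    ← intervalIntegral.integral_sub hint hint_sum,
    intervalIntegral.integral_of_le hy]
  refine (norm_integral_le_of_norm_le
    ((hmono.mono_set Set.Ioc_subset_Ioi_self).const_mul (2 / L ^ (k + 1)))
    (ae_restrict_of_forall_mem measurableSet_Ioc fun u hu => ?_)).trans ?_
  · exact norm_fract_mul_inv_sub_sum_le k hL hu.1.le
      ((log_le_log (zero_lt_one.trans hu.1) hu.2).trans hyL)
  · rw [integral_const_mul]
    refine mul_le_mul_of_nonneg_left (setIntegral_mono_set hmono ?_
      Set.Ioc_subset_Ioi_self.eventuallyLE) (by positivity)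
    refine ae_restrict_of_forall_mem measurableSet_Ioi fun u hu => ?_
    have hlog := log_nonneg (le_of_lt hu)
    exact div_nonneg (by positivity) (sq_nonneg u)

/-! ### The two ranges of primes -/

/-- The parameter `⌈(log x) ^ B⌉` of the hyperbola method: the primes up to `x / logCutoff B x` are
summed with Mertens' theorem and the larger ones with the prime number theorem. -/
noncomputable def logCutoff (B : ℕ) (x : ℝ) : ℕ := ⌈log x ^ B⌉₊

lemma log_pow_le_logCutoff (B : ℕ) (x : ℝ) : log x ^ B ≤ logCutoff B x := Nat.le_ceil _

lemma logCutoff_le_two_mul {B : ℕ} {x : ℝ} (hx : 1 ≤ log x) :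
    (logCutoff B x : ℝ) ≤ 2 * log x ^ B := by
  have hpow : 1 ≤ log x ^ B := one_le_pow₀ hx
  have hceil : (logCutoff B x : ℝ) < log x ^ B + 1 := Nat.ceil_lt_add_one (by linarith)
  linarith

lemma one_le_logCutoff {B : ℕ} {x : ℝ} (hx : 1 ≤ log x) : 1 ≤ logCutoff B x :=
  Nat.one_le_ceil_iff.mpr (by positivity)

lemma eventually_logCutoff_le_sqrt (B : ℕ) : ∀ᶠ x in atTop, (logCutoff B x : ℝ) ≤ √x := by
  have hlog : (fun x => log x ^ B) =o[atTop] fun x => √x := by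
    simpa only [rpow_natCast, ← sqrt_eq_rpow] using
      isLittleO_log_rpow_rpow_atTop (B : ℝ) (half_pos one_pos)
  filter_upwards [hlog.bound (half_pos one_pos), tendsto_log_atTop.eventually_ge_atTop 1]
    with x hx hx1
  rw [norm_of_nonneg (by positivity), norm_of_nonneg (sqrt_nonneg x)] at hx
  linarith [logCutoff_le_two_mul (B := B) hx1]

lemma eventually_sqrt_le_div_logCutoff (B : ℕ) :
    ∀ᶠ x in atTop, √x ≤ x / logCutoff B x := by
  filter_upwards [eventually_logCutoff_le_sqrt B, tendsto_log_atTop.eventually_ge_atTop 1,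
    eventually_ge_atTop 0] with x hx hlog hx0
  rw [le_div_iff₀ (Nat.cast_pos.mpr (one_le_logCutoff hlog))]
  calc √x * logCutoff B x ≤ √x * √x := by gcongr
    _ = x := mul_self_sqrt hx0

lemma tendsto_div_logCutoff_atTop (B : ℕ) :
    Tendsto (fun x => x / logCutoff B x) atTop atTop :=
  tendsto_atTop_mono' atTop (eventually_sqrt_le_div_logCutoff B) tendsto_sqrt_atTop

lemma eventually_half_log_le_log_div_logCutoff (B : ℕ) :
    ∀ᶠ x in atTop, log x / 2 ≤ log (x / logCutoff B x) := by
  filter_upwards [eventually_sqrt_le_div_logCutoff B, eventually_gt_atTop 0] with x hx hx0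
  rw [← log_sqrt hx0.le]
  exact log_le_log (sqrt_pos.mpr hx0) hx

lemma inv_log_div_logCutoff_pow_isBigO (B k : ℕ) :
    (fun x => (log (x / logCutoff B x) ^ k)⁻¹) =O[atTop] fun x => (log x ^ k)⁻¹ := by
  refine .of_bound (2 ^ k) ?_
  filter_upwards [eventually_half_log_le_log_div_logCutoff B,
    tendsto_log_atTop.eventually_gt_atTop 0] with x hx hlog
  rw [norm_of_nonneg (by have := (half_pos hlog).trans_le hx; positivity),
    norm_of_nonneg (by positivity)]
  calc (log (x / logCutoff B x) ^ k)⁻¹ ≤ ((log x / 2) ^ k)⁻¹ := by gcongr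
    _ = 2 ^ k * (log x ^ k)⁻¹ := by rw [div_pow, inv_div, div_eq_mul_inv]

lemma div_logCutoff_isBigO {B k : ℕ} (hk : k ≤ B) :
    (fun x => x / logCutoff B x) =O[atTop] fun x => x / log x ^ k := by
  refine .of_bound 1 ?_
  filter_upwards [tendsto_log_atTop.eventually_ge_atTop 1, eventually_ge_atTop 0] with x hlog hx
  rw [norm_of_nonneg (by positivity), norm_of_nonneg (by positivity), one_mul]
  gcongr
  exact (pow_le_pow_right₀ hlog hk).trans (log_pow_le_logCutoff B x)

theorem sum_small_primes_div_sub_isBigO {B k : ℕ} (hk : k ≤ B) :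
    (fun x : ℝ => ∑ p ∈ Finset.Ioc 0 (⌊x⌋₊ / logCutoff B x) with p.Prime, ((⌊x⌋₊ / p : ℕ) : ℝ) -
        x * (log (log (x / logCutoff B x)) + mertensB1)) =O[atTop] fun x => x / log x ^ k := by
  have hrounding : (fun x : ℝ =>
      ∑ p ∈ Finset.Ioc 0 (⌊x⌋₊ / logCutoff B x) with p.Prime, ((⌊x⌋₊ / p : ℕ) : ℝ) -
        x * primeRecipSum (x / logCutoff B x)) =O[atTop] fun x => x / log x ^ k := by
    refine .trans (.of_norm_eventuallyLE ?_) (div_logCutoff_isBigO hk)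
    filter_upwards [eventually_ge_atTop 0] with x hx
    rw [← Nat.floor_div_natCast]
    exact abs_sum_small_primes_div_sub_le hx (by positivity)
  have hmertens := (isBigO_refl (fun x : ℝ => x) atTop).mul
    (((primeRecipSum_sub_isBigO k).comp_tendsto (tendsto_div_logCutoff_atTop B)).trans
      (inv_log_div_logCutoff_pow_isBigO B k))
  refine (hrounding.add hmertens).congr_left fun x => ?_
  simp only [Function.comp_apply]
  ring

lemma exists_forall_mem_Icc_sqrt_abs_theta_sub_le (A : ℕ) : ∃ C, ∀ᶠ x in atTop,
    ∀ t ∈ Set.Icc √x x, |Chebyshev.theta t - t| ≤ C * (x / log x ^ A) := by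
  obtain ⟨C, hC, hbound⟩ := (theta_sub_id_isBigO A).exists_nonneg
  refine ⟨2 ^ A * C, ?_⟩
  filter_upwards [tendsto_sqrt_atTop.eventually (eventually_forall_ge_atTop.mpr hbound.bound),
    eventually_gt_atTop 1] with x hx hx1 t ht
  have hlogx : 0 < log x := log_pos hx1
  have hlogt : log x / 2 ≤ log t := by
    rw [← log_sqrt (by linarith)]
    exact log_le_log (sqrt_pos.mpr (by linarith)) ht.1
  have ht0 : 0 ≤ t := (sqrt_nonneg x).trans ht.1
  have hlogt0 : 0 < log t := (half_pos hlogx).trans_le hlogt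
  calc |Chebyshev.theta t - t| ≤ C * ‖t / log t ^ A‖ := hx t ht.1
    _ = C * (t / log t ^ A) := by rw [norm_of_nonneg (by positivity)]
    _ ≤ C * (x / (log x / 2) ^ A) := by
      have := ht.2
      gcongr
    _ = 2 ^ A * C * (x / log x ^ A) := by rw [div_pow]; field_simp

theorem sum_large_primes_div_sub_isBigO (B k : ℕ) :
    (fun x : ℝ => ∑ p ∈ Finset.Ioc (⌊x⌋₊ / logCutoff B x) ⌊x⌋₊ with p.Prime,
        ((⌊x⌋₊ / p : ℕ) : ℝ) - x * (log (log x) - log (log (x / logCutoff B x)) -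
          fractLogIntegral (log x) (logCutoff B x))) =O[atTop] fun x => x / log x ^ k := by
  obtain ⟨C, hC⟩ := exists_forall_mem_Icc_sqrt_abs_theta_sub_le (B + k)
  refine .of_bound (2 * C) ?_
  filter_upwards [hC, eventually_sqrt_le_div_logCutoff B, eventually_logCutoff_le_sqrt B,
    eventually_half_log_le_log_div_logCutoff B, tendsto_log_atTop.eventually_ge_atTop 4,
    eventually_gt_atTop 1] with x hθ hsqrt hcut hhalf hlog hx
  have hy : 1 ≤ logCutoff B x := one_le_logCutoff (by linarith)
  have hyx : (logCutoff B x : ℝ) < x := hcut.trans_lt (sqrt_lt_self_iff.mpr hx)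
  have hE : 0 ≤ C * (x / log x ^ (B + k)) :=
    (abs_nonneg _).trans (hθ x ⟨(sqrt_lt_self_iff.mpr hx).le, le_rfl⟩)
  have hinv : 2 * (log (x / logCutoff B x))⁻¹ ≤ 1 := by
    rw [← div_eq_mul_inv, div_le_one (by linarith)]
    linarith
  calc _ ≤ logCutoff B x * (2 * (log (x / logCutoff B x))⁻¹ * (C * (x / log x ^ (B + k)))) :=
        abs_sum_large_primes_div_sub_le hy hyx fun t ht => hθ t ⟨hsqrt.trans ht.1, ht.2⟩
    _ ≤ 2 * log x ^ B * (1 * (C * (x / log x ^ (B + k)))) := by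
        have hinv0 : 0 ≤ 2 * (log (x / logCutoff B x))⁻¹ :=
          mul_nonneg zero_le_two (inv_nonneg.mpr (by linarith))
        gcongr
        exact logCutoff_le_two_mul (by linarith)
    _ = 2 * C * ‖x / log x ^ k‖ := by
        rw [norm_of_nonneg (by positivity), pow_add]
        field_simp

lemma integral_Ioi_logCutoff_div_isBigO (n k : ℕ) :
    (fun x => (∫ u in Set.Ioi (logCutoff (2 * k) x : ℝ), Int.fract u * log u ^ n / u ^ 2) /
      log x ^ (n + 1)) =O[atTop] fun x => (log x ^ k)⁻¹ := by
  refine .of_bound (2 ^ (n + 1) * n.factorial) ?_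
  filter_upwards [tendsto_log_atTop.eventually_ge_atTop 1] with x hlog
  have hpow : 1 ≤ log x ^ (n + 1) := one_le_pow₀ hlog
  have hcut : (logCutoff (2 * k) x : ℝ) ^ (-(1 / 2) : ℝ) ≤ (log x ^ k)⁻¹ := by
    rw [rpow_neg (Nat.cast_nonneg _), ← sqrt_eq_rpow]
    gcongr
    refine le_sqrt_of_sq_le ?_
    rw [← pow_mul, mul_comm]
    exact log_pow_le_logCutoff _ x
  rw [norm_div, norm_of_nonneg (zero_le_one.trans hpow),
    norm_of_nonneg (by positivity : 0 ≤ (log x ^ k)⁻¹)]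
  calc _ ≤ ‖∫ u in Set.Ioi (logCutoff (2 * k) x : ℝ), Int.fract u * log u ^ n / u ^ 2‖ :=
        div_le_self (norm_nonneg _) hpow
    _ ≤ 2 ^ (n + 1) * n.factorial * (logCutoff (2 * k) x : ℝ) ^ (-(1 / 2) : ℝ) :=
        norm_integral_Ioi_fract_mul_log_pow_div_sq_le n (mod_cast one_le_logCutoff hlog)
    _ ≤ 2 ^ (n + 1) * n.factorial * (log x ^ k)⁻¹ := by gcongr

theorem fractLogIntegral_sub_sum_cconst_isBigO (k : ℕ) :
    (fun x => fractLogIntegral (log x) (logCutoff (2 * (k + 1)) x) -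
        ∑ n ∈ Finset.range k, cconst n * n.factorial / log x ^ (n + 1)) =O[atTop]
      fun x => (log x ^ (k + 1))⁻¹ := by
  have htails := IsBigO.fun_sum fun n (_ : n ∈ Finset.range k) =>
    integral_Ioi_logCutoff_div_isBigO n (k + 1)
  have htruncated : (fun x => fractLogIntegral (log x) (logCutoff (2 * (k + 1)) x) -
      ∑ n ∈ Finset.range k, (∫ u in (1 : ℝ)..logCutoff (2 * (k + 1)) x,
        Int.fract u * log u ^ n / u ^ 2) / log x ^ (n + 1)) =O[atTop]
          fun x => (log x ^ (k + 1))⁻¹ := by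
    refine .of_bound (2 * ∫ u in Set.Ioi 1, log u ^ k / u ^ 2) ?_
    filter_upwards [tendsto_log_atTop.eventually_ge_atTop 1, eventually_ge_atTop 0,
      eventually_logCutoff_le_sqrt (2 * (k + 1))] with x hlog hx hcut
    have hy : (1 : ℝ) ≤ logCutoff (2 * (k + 1)) x := mod_cast one_le_logCutoff hlog
    have hyL : log (logCutoff (2 * (k + 1)) x) ≤ log x / 2 :=
      (log_le_log (by linarith) hcut).trans_eq (log_sqrt hx)
    refine (norm_fractLogIntegral_sub_sum_le k (by linarith) hy hyL).trans_eq ?_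
    rw [norm_of_nonneg (by positivity)]
    ring
  refine (htruncated.sub htails).congr' ?_ .rfl
  filter_upwards [tendsto_log_atTop.eventually_ge_atTop 1] with x hlog
  have hy : (1 : ℝ) ≤ logCutoff (2 * (k + 1)) x := mod_cast one_le_logCutoff hlog
  simp_rw [cconst_mul_factorial_eq_add _ hy, add_div, Finset.sum_add_distrib]
  ring

lemma sum_card_primeFactors_eq_add (N y : ℕ) :
    ∑ n ∈ Finset.Icc 1 N, (n.primeFactors.card : ℝ) =
      ∑ p ∈ Finset.Ioc 0 (N / y) with p.Prime, ((N / p : ℕ) : ℝ) +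
        ∑ p ∈ Finset.Ioc (N / y) N with p.Prime, ((N / p : ℕ) : ℝ) := by
  rw [sum_card_primeFactors]
  simp only [Finset.sum_filter]
  exact (Finset.sum_Ioc_consecutive _ (Nat.zero_le _) (Nat.div_le_self N y)).symm

theorem sum_omega_expansion :
    ∀ k : ℕ, 1 ≤ k → ∃ C > (0:ℝ), ∀ᶠ x : ℝ in atTop,
      |(∑ n ∈ Finset.Icc 1 ⌊x⌋₊, (n.primeFactors.card : ℝ)) -
          (x * Real.log (Real.log x) + mertensB1 * x -
            ∑ n ∈ Finset.range k, cconst n * (n.factorial : ℝ) * x / (Real.log x) ^ (n + 1))| ≤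
        C * x / (Real.log x) ^ (k + 1) := by
  intro k _
  have hsmall := sum_small_primes_div_sub_isBigO (B := 2 * (k + 1)) (k := k + 1) (by omega)
  have hlarge := sum_large_primes_div_sub_isBigO (2 * (k + 1)) (k + 1)
  have hexpand := (isBigO_refl (fun x : ℝ => x) atTop).mul
    (fractLogIntegral_sub_sum_cconst_isBigO k)
  obtain ⟨C, hC, hbound⟩ := ((hsmall.add hlarge).sub hexpand).exists_pos
  refine ⟨C, hC, ?_⟩
  filter_upwards [hbound.bound, eventually_gt_atTop 1] with x hx hx1
  have hlog := log_pos hx1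
  have hfactor : ∑ n ∈ Finset.range k, cconst n * n.factorial * x / log x ^ (n + 1) =
      x * ∑ n ∈ Finset.range k, cconst n * n.factorial / log x ^ (n + 1) := by
    rw [Finset.mul_sum]
    exact Finset.sum_congr rfl fun n _ => by ring
  rw [norm_of_nonneg (by positivity : 0 ≤ x / log x ^ (k + 1)), ← mul_div_assoc] at hx
  rw [sum_card_primeFactors_eq_add ⌊x⌋₊ (logCutoff (2 * (k + 1)) x), hfactor]
  refine (congrArg abs ?_).trans_le hx
  ring
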